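/- Let c = 2π√(5/12). For every ε > 0 there exists N such that for all positive integers m, n with min(m,n) ≥ N, one has | π(m,n) / [ (5/(2^4·3)) · e^{c√μ}/μ^{3/2} · (1 + e^{−c|n−m|/(2√μ)})^{−1} ] − 1 | < ε, where μ := min(m,n). In other words, uniformly for positive integers m, n, π(m,n) ~ (5/48) · e^{c√μ}/μ^{3/2} · (1 + e^{−c|n−m|/(2√μ)})^{−1} as μ = min(m,n) → ∞. -/

import Mathlib

open Finset

/-- A pair of sequences of parts is *steadily decreasing* if
`min (a i) (b i) ≥ max (a (i+1)) (b (i+1))` for all `i`. -/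
noncomputable def SteadilyDecreasing (a b : ℕ → ℕ) : Prop :=
  ∀ i, max (a (i + 1)) (b (i + 1)) ≤ min (a i) (b i)

/-- `bipartitePi m n` is the number of pairs of partitions (given as non-increasing,
finitely supported sequences) of the bipartite number `(m, n)` with steadily
decreasing parts. -/
noncomputable def bipartitePi (m n : ℕ) : ℕ :=
  Nat.card {p : (ℕ →₀ ℕ) × (ℕ →₀ ℕ) //
    (∀ i, p.1 (i + 1) ≤ p.1 i) ∧ (∀ i, p.2 (i + 1) ≤ p.2 i) ∧
    SteadilyDecreasing p.1 p.2 ∧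
    (p.1.sum fun _ x => x) = m ∧ (p.2.sum fun _ x => x) = n}

/-- The partition function `p n`. -/
noncomputable def partitionCount (n : ℕ) : ℕ := Nat.card (Nat.Partition n)

/-- The partition function extended to the integers, with `p r = 0` for `r < 0`. -/
noncomputable def partitionCountInt (r : ℤ) : ℕ := if 0 ≤ r then partitionCount r.toNat else 0

/-- The cubic partition function `c n`, counting partitions of `n` in which even
parts come in two colors (equivalently, pairs of a partition together with a
partition into even parts, of total size `n`). -/
noncomputable def cubicPartition (n : ℕ) : ℕ :=
  Nat.card {p : Multiset ℕ × Multiset ℕ //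
    (∀ i ∈ p.1, 0 < i) ∧ (∀ i ∈ p.2, 0 < i ∧ Even i) ∧ p.1.sum + p.2.sum = n}

/-- The Andrews–Garvan crank of a partition: the largest part if there are no ones,
and otherwise the number of parts larger than the number of ones minus the number of
ones. -/
noncomputable def crank {n : ℕ} (l : n.Partition) : ℤ :=
  if l.parts.count 1 = 0 then (l.parts.sup : ℤ)
  else ((l.parts.filter fun p => l.parts.count 1 < p).card : ℤ) - l.parts.count 1

/-- `crankM m n` is the crank counting function `M(m, n)`: the number of partitions
of `n` with crank `m`, with the standard convention at `n = 1`
(`M(0,1) = -1`, `M(±1,1) = 1`, `M(m,1) = 0` otherwise). -/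
noncomputable def crankM (m : ℤ) (n : ℕ) : ℤ :=
  if n = 1 then (if m = 0 then -1 else if m.natAbs = 1 then 1 else 0)
  else (Nat.card {l : n.Partition // crank l = m} : ℤ)

/-- `alphaBip s k = Σ_{ℓ ≥ 0} (-1)^ℓ p(k - ℓ(ℓ+1)/2 - ℓ s)`. -/
noncomputable def alphaBip (s k : ℕ) : ℤ :=
  ∑' ℓ : ℕ, (-1 : ℤ) ^ ℓ *
    (partitionCountInt ((k : ℤ) - ℓ * (ℓ + 1) / 2 - ℓ * s) : ℤ)

/-- `Dbip m n = π(m,n) - π(m-1,n)`, with `π(-1,n) := 0`. -/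
noncomputable def Dbip (m n : ℕ) : ℤ :=
  (bipartitePi m n : ℤ) - if m = 0 then 0 else (bipartitePi (m - 1) n : ℤ)

namespace BipAsy

abbrev FS := ℕ →₀ ℕ

/-- total -/
def tot (s : FS) : ℕ := s.sum fun _ x => x

/-- weighted total -/
def wt (c : ℕ → ℕ) (s : FS) : ℕ := s.sum fun j x => c j * x

lemma tot_eq_range (s : FS) {N : ℕ} (h : ∀ i, N ≤ i → s i = 0) :
    tot s = ∑ i ∈ range N, s i := by
  unfold tot
  apply Finsupp.sum_of_support_subset
  · intro i hi
    by_contra hc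
    simp at hi hc
    exact hi (h i hc)
  · simp

lemma wt_eq_range (c : ℕ → ℕ) (s : FS) {N : ℕ} (h : ∀ i, N ≤ i → s i = 0) :
    wt c s = ∑ i ∈ range N, c i * s i := by
  unfold wt
  apply Finsupp.sum_of_support_subset
  · intro i hi
    by_contra hc
    simp at hi hc
    exact hi (h i hc)
  · simp

lemma exists_bd (s : FS) : ∃ N, ∀ i, N ≤ i → s i = 0 := by
  refine ⟨s.support.sup id + 1, fun i hi => ?_⟩
  by_contra hc
  have : i ≤ s.support.sup id := Finset.le_sup (f := id) (by simpa using hc)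
  omega

/-- pairs with steadily decreasing parts -/
abbrev SDP : Type := {p : FS × FS // SteadilyDecreasing p.1 p.2}

/-- the d-sequence -/
noncomputable def dseq (p : FS × FS) : FS :=
  Finsupp.onFinset p.1.support
    (fun i => min (p.1 i) (p.2 i) - max (p.1 (i+1)) (p.2 (i+1))) (by
      intro i hi
      simp only [Finsupp.mem_support_iff]
      omega)

@[simp] lemma dseq_apply (p : FS × FS) (i : ℕ) :
    dseq p i = min (p.1 i) (p.2 i) - max (p.1 (i+1)) (p.2 (i+1)) := rfl

/-- the main map -/
noncomputable def Psi (x : SDP × FS) : FS × (FS × FS) :=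
  (dseq x.1.1, (x.1.1.1 - x.1.1.2) + x.2, (x.1.1.2 - x.1.1.1) + x.2)

lemma Psi_inj : Function.Injective Psi := by
  rintro ⟨⟨⟨a, b⟩, h⟩, s⟩ ⟨⟨⟨a', b'⟩, h'⟩, s'⟩ he
  simp only [Psi, Prod.mk.injEq] at he
  obtain ⟨h1, h2, h3⟩ := he
  have e1 : ∀ i, min (a i) (b i) - max (a (i+1)) (b (i+1))
      = min (a' i) (b' i) - max (a' (i+1)) (b' (i+1)) := fun i => by
    simpa using DFunLike.congr_fun h1 i
  have e2 : ∀ i, a i - b i + s i = a' i - b' i + s' i := fun i => by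
    simpa using DFunLike.congr_fun h2 i
  have e3 : ∀ i, b i - a i + s i = b' i - a' i + s' i := fun i => by
    simpa using DFunLike.congr_fun h3 i
  have hh : ∀ i, max (a (i + 1)) (b (i + 1)) ≤ min (a i) (b i) := h
  have hh' : ∀ i, max (a' (i + 1)) (b' (i + 1)) ≤ min (a' i) (b' i) := h'
  obtain ⟨N1, hN1⟩ := exists_bd (a + b)
  obtain ⟨N2, hN2⟩ := exists_bd (a' + b')
  have key : ∀ j i, N1 + N2 ≤ i + j → a i = a' i ∧ b i = b' i := by
    intro j
    induction j with
    | zero =>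
      intro i hi
      have := hN1 i (by omega)
      have := hN2 i (by omega)
      simp at *
      omega
    | succ j ih =>
      intro i hi
      obtain ⟨u1, u2⟩ := ih (i+1) (by omega)
      have := e1 i
      have := e2 i
      have := e3 i
      have := hh i
      have := hh' i
      omega
  have ka : a = a' := by ext i; exact (key (N1+N2) i (by omega)).1
  have kb : b = b' := by ext i; exact (key (N1+N2) i (by omega)).2
  subst ka kb
  have : s = s' := by ext i; have := e2 i; omega
  subst this
  rfl

lemma Psi_surj : Function.Surjective Psi := by
  rintro ⟨d, F, G⟩
  obtain ⟨N, hN⟩ := exists_bd (d + F + G)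
  have hN' : ∀ i, N ≤ i → d i = 0 ∧ F i = 0 ∧ G i = 0 := fun i hi => by
    have := hN i hi
    simp at this
    omega
  let M : ℕ → ℕ := fun i => ∑ j ∈ Ico i N, (d j + (max (F j) (G j) - min (F j) (G j)))
  have hM0 : ∀ i, N ≤ i → M i = 0 := fun i hi => by simp [M, Finset.Ico_eq_empty_of_le hi]
  have hM : ∀ i, M i = d i + (max (F i) (G i) - min (F i) (G i)) + M (i+1) := by
    intro i
    by_cases hi : i < N
    · simp only [M]
      rw [Finset.sum_eq_sum_Ico_succ_bot hi]
    · rw [hM0 i (by omega), hM0 (i+1) (by omega)]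
      have := hN' i (by omega)
      omega
  let a : FS := Finsupp.onFinset (range N) (fun i => M i - (G i - F i)) (by
    intro i hi
    by_contra hc
    simp at hc
    have := hM0 i hc
    omega)
  let b : FS := Finsupp.onFinset (range N) (fun i => M i - (F i - G i)) (by
    intro i hi
    by_contra hc
    simp at hc
    have := hM0 i hc
    omega)
  let s : FS := Finsupp.onFinset (range N) (fun i => min (F i) (G i)) (by
    intro i hi
    by_contra hc
    simp at hc
    have := hN' i hc
    omega)
  have ha : ∀ i, a i = M i - (G i - F i) := fun i => rfl
  have hb : ∀ i, b i = M i - (F i - G i) := fun i => rfl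
  have hs : ∀ i, s i = min (F i) (G i) := fun i => rfl
  refine ⟨(⟨(a, b), ?_⟩, s), ?_⟩
  · intro i
    have := hM i
    have := hM (i+1)
    simp only [ha, hb]
    omega
  · simp only [Psi, Prod.mk.injEq]
    refine ⟨?_, ?_, ?_⟩
    · ext i
      have := hM i
      have := hM (i+1)
      simp only [dseq_apply, ha, hb]
      omega
    · ext i
      have := hM i
      simp only [Finsupp.add_apply, Finsupp.tsub_apply, ha, hb, hs]
      omega
    · ext i
      have := hM i
      simp only [Finsupp.add_apply, Finsupp.tsub_apply, ha, hb, hs]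
      omega

lemma abel (a b s : ℕ → ℕ) (h : SteadilyDecreasing a b) (N : ℕ) :
    ∑ i ∈ range N, ((i+1) * (min (a i) (b i) - max (a (i+1)) (b (i+1)))
      + i * (a i - b i + s i) + (i+1) * (b i - a i + s i)) + N * max (a N) (b N)
    = ∑ i ∈ range N, (b i + (2*i+1) * s i) := by
  induction N with
  | zero => simp
  | succ N ih =>
    rw [sum_range_succ, sum_range_succ, ← ih]
    have h1 := h N
    obtain ⟨d, hd⟩ := Nat.exists_eq_add_of_le h1
    rw [hd, Nat.add_sub_cancel_left]
    rcases le_total (a N) (b N) with hab | hab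
    · rw [min_eq_left hab] at hd
      obtain ⟨e, he⟩ := Nat.exists_eq_add_of_le hab
      rw [Nat.sub_eq_zero_of_le hab, he, Nat.add_sub_cancel_left, max_eq_right (by omega : a N ≤ a N + e), hd]
      ring
    · rw [min_eq_right hab] at hd
      obtain ⟨e, he⟩ := Nat.exists_eq_add_of_le hab
      rw [Nat.sub_eq_zero_of_le hab, he, Nat.add_sub_cancel_left, max_eq_left (by omega : b N ≤ b N + e), hd]
      ring

lemma Psi_wt (x : SDP × FS) :
    wt (fun j => j+1) (Psi x).1 + wt (fun j => j) (Psi x).2.1 + wt (fun j => j+1) (Psi x).2.2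
      = tot x.1.1.2 + wt (fun j => 2*j+1) x.2 := by
  obtain ⟨⟨⟨a, b⟩, h⟩, s⟩ := x
  obtain ⟨N, hN⟩ := exists_bd (a + b + s)
  have hN' : ∀ i, N ≤ i → a i = 0 ∧ b i = 0 ∧ s i = 0 := fun i hi => by
    have := hN i hi
    simp at this
    omega
  have := abel a b s h N
  rw [(hN' N le_rfl).1, (hN' N le_rfl).2.1] at this
  simp only [Psi]
  rw [wt_eq_range _ _ (N := N), wt_eq_range _ _ (N := N), wt_eq_range _ _ (N := N), tot_eq_range _ (N := N), wt_eq_range _ _ (N := N)]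
  · simp only [sum_add_distrib] at this
    simpa [sum_add_distrib] using this
  all_goals
    intro i hi
    have := hN' i hi
    first | omega | (simp; done) | (simp; omega)

lemma tot_add (s t : FS) : tot (s + t) = tot s + tot t := by
  unfold tot
  rw [Finsupp.sum_add_index'] <;> simp

lemma Psi_tot (x : SDP × FS) :
    tot (Psi x).2.1 + tot x.1.1.2 = tot (Psi x).2.2 + tot x.1.1.1 := by
  obtain ⟨⟨⟨a, b⟩, h⟩, s⟩ := x
  simp only [Psi]
  rw [← tot_add, ← tot_add]
  congr 1
  ext i
  simp
  omega

end BipAsy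

namespace BipAsy
open ENNReal

/-- split off the zeroth coordinate -/
noncomputable def spl (d : FS) : ℕ × FS := (d 0, d.comapDomain Nat.succ (Nat.succ_injective.injOn))

lemma spl_bij : Function.Bijective spl := by
  constructor
  · intro d e h
    simp only [spl, Prod.mk.injEq] at h
    ext i
    cases i with
    | zero => exact h.1
    | succ i => simpa using DFunLike.congr_fun h.2 i
  · rintro ⟨a, t⟩
    refine ⟨Finsupp.single 0 a + Finsupp.embDomain ⟨Nat.succ, Nat.succ_injective⟩ t, ?_⟩
    simp only [spl, Prod.mk.injEq]
    constructor
    · have : (Finsupp.embDomain ⟨Nat.succ, Nat.succ_injective⟩ t : FS) 0 = 0 :=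
        Finsupp.embDomain_of_notMem_range _ _ _ (by simp)
      simp [this]
    · ext i
      have := Finsupp.embDomain_apply_self ⟨Nat.succ, Nat.succ_injective⟩ t i
      simp at this
      simp [this]

noncomputable def splE : FS ≃ ℕ × FS := Equiv.ofBijective spl spl_bij

lemma sum_spl {R : Type*} [AddCommMonoid R] (f : ℕ → ℕ → R) (hf : ∀ i, f i 0 = 0) (d : FS) :
    d.sum f = f 0 (splE d).1 + (splE d).2.sum (fun j => f (j+1)) := by
  obtain ⟨N, hN⟩ := exists_bd d
  have e1 : d.sum f = ∑ i ∈ range (N+1), f i (d i) := by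
    apply Finsupp.sum_of_support_subset
    · intro i hi
      by_contra hc
      simp at hi hc
      exact hi (hN i (by omega))
    · simpa using fun i _ => hf i
  have e2 : (splE d).2.sum (fun j => f (j+1)) = ∑ i ∈ range N, f (i+1) (d (i+1)) := by
    apply Finsupp.sum_of_support_subset
    · intro i hi
      by_contra hc
      simp [splE, spl] at hi hc
      exact hi (hN (i+1) (by omega))
    · simpa using fun i _ => hf (i+1)
  rw [e1, e2, sum_range_succ', add_comm]
  rfl

lemma prod_spl {R : Type*} [CommMonoid R] (f : ℕ → ℕ → R) (hf : ∀ i, f i 0 = 1) (d : FS) :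
    d.prod f = f 0 (splE d).1 * (splE d).2.prod (fun j => f (j+1)) := by
  obtain ⟨N, hN⟩ := exists_bd d
  have e1 : d.prod f = ∏ i ∈ range (N+1), f i (d i) := by
    apply Finsupp.prod_of_support_subset
    · intro i hi
      by_contra hc
      simp at hi hc
      exact hi (hN i (by omega))
    · simpa using fun i _ => hf i
  have e2 : (splE d).2.prod (fun j => f (j+1)) = ∏ i ∈ range N, f (i+1) (d (i+1)) := by
    apply Finsupp.prod_of_support_subset
    · intro i hi
      by_contra hc
      simp [splE, spl] at hi hc
      exact hi (hN (i+1) (by omega))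
    · simpa using fun i _ => hf (i+1)
  rw [e1, e2, prod_range_succ', mul_comm]
  rfl

/-- multi-geometric series -/
noncomputable def Z (w : ℕ → ℝ≥0∞) : ℝ≥0∞ := ∑' d : FS, d.prod fun j x => w j ^ x

lemma Z_succ (w : ℕ → ℝ≥0∞) : Z w = (1 - w 0)⁻¹ * Z (fun j => w (j+1)) := by
  unfold Z
  rw [← ENNReal.tsum_geometric, ← ENNReal.tsum_mul_right, ← splE.symm.tsum_eq, ENNReal.tsum_prod']
  congr 1; ext a
  rw [← ENNReal.tsum_mul_left]
  congr 1; ext t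
  rw [prod_spl _ (by simp)]
  simp

lemma Z_prod (N : ℕ) : ∀ w : ℕ → ℝ≥0∞,
    Z w = (∏ j ∈ range N, (1 - w j)⁻¹) * Z (fun j => w (j+N)) := by
  induction N with
  | zero => intro w; simp
  | succ N ih =>
    intro w
    rw [Z_succ, ih, prod_range_succ', mul_comm _ (1 - w 0)⁻¹, mul_assoc]
    congr 3

lemma one_le_Z (w : ℕ → ℝ≥0∞) : 1 ≤ Z w := by
  unfold Z
  refine le_trans ?_ (ENNReal.le_tsum 0)
  simp

lemma Z_zero : Z (fun _ => 0) = 1 := by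
  unfold Z
  rw [tsum_eq_single 0]
  · simp
  · intro d hd
    obtain ⟨i, hi⟩ := Finsupp.ne_iff.mp hd
    simp at hi
    unfold Finsupp.prod
    exact Finset.prod_eq_zero (i := i) (by simpa using hi) (zero_pow hi)

lemma Z_eq_iSup (w : ℕ → ℝ≥0∞) : Z w = ⨆ N, ∏ j ∈ range N, (1 - w j)⁻¹ := by
  apply le_antisymm
  · unfold Z
    rw [ENNReal.tsum_eq_iSup_sum]
    apply iSup_le
    intro S
    choose bd hbd using exists_bd
    let N := S.sup bd
    refine le_trans ?_ (le_iSup _ N)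
    have h1 : (∏ j ∈ range N, (1 - w j)⁻¹) = Z (fun j => if j < N then w j else 0) := by
      rw [Z_prod N]
      rw [show (fun j => if j + N < N then w (j+N) else 0) = fun _ => 0 by
        ext j; rw [if_neg (by omega)]]
      rw [Z_zero, mul_one]
      apply prod_congr rfl
      intro j hj
      rw [if_pos (by simpa using hj)]
    rw [h1]
    unfold Z
    refine le_trans ?_ (ENNReal.sum_le_tsum S)
    apply Finset.sum_le_sum
    intro d hd
    apply le_of_eq
    apply Finset.prod_congr rfl
    intro j hj
    have : j < N := by
      by_contra hc
      simp at hj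
      exact hj (hbd d j (le_trans (Finset.le_sup hd) (by omega)))
    simp [this]
  · apply iSup_le
    intro N
    rw [Z_prod N]
    exact le_mul_of_one_le_right' (one_le_Z _)

lemma Z_tendsto (w : ℕ → ℝ≥0∞) :
    Filter.Tendsto (fun N => ∏ j ∈ range N, (1 - w j)⁻¹) Filter.atTop (nhds (Z w)) := by
  rw [Z_eq_iSup]
  apply tendsto_atTop_iSup
  apply monotone_nat_of_le_succ
  intro n
  rw [prod_range_succ]
  apply le_mul_of_one_le_right'
  simp

lemma Z_pow (q : ℝ≥0∞) (c : ℕ → ℕ) : ∑' d : FS, q ^ wt c d = Z (fun j => q ^ c j) := by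
  unfold Z
  congr 1; ext d
  unfold wt Finsupp.prod Finsupp.sum
  rw [← Finset.prod_pow_eq_pow_sum]
  apply Finset.prod_congr rfl
  intro j _
  rw [pow_mul]

/-- partitions into at most `b` parts, weighted -/
noncomputable def ph (q : ℝ≥0∞) (b : ℕ) : ℝ≥0∞ :=
  ∑' F : FS, if tot F = b then q ^ wt (fun j => j) F else 0

lemma wt_succ (F : FS) : wt (fun j => j+1) F = wt (fun j => j) F + tot F := by
  unfold wt tot
  rw [← Finsupp.sum_add]
  congr 1; ext; ring

lemma tot_eq_zero (F : FS) : tot F = 0 ↔ F = 0 := by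
  constructor
  · intro h
    unfold tot Finsupp.sum at h
    rw [Finset.sum_eq_zero_iff] at h
    ext i
    by_contra hc
    exact hc (h i (by simpa using hc))
  · rintro rfl; simp [tot]

lemma ph_zero (q : ℝ≥0∞) : ph q 0 = 1 := by
  unfold ph
  rw [tsum_eq_single 0]
  · simp [tot, wt]
  · intro d hd
    rw [if_neg]
    rwa [tot_eq_zero]

lemma ph_succ (q : ℝ≥0∞) (b : ℕ) : ph q (b+1) = q^(b+1) * ph q (b+1) + ph q b := by
  have key : ∀ c, ph q c = ∑' a : ℕ, ∑' t : FS, if a + tot t = c then q ^ wt (fun j => j+1) t else 0 := by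
    intro c
    unfold ph
    rw [← splE.symm.tsum_eq, ENNReal.tsum_prod']
    congr 1; ext a
    congr 1; ext t
    have h1 : tot (splE.symm (a, t)) = a + tot t := by
      unfold tot; rw [sum_spl _ (by simp)]; simp
    have h2 : wt (fun j => j) (splE.symm (a, t)) = wt (fun j => j+1) t := by
      unfold wt; rw [sum_spl _ (by simp)]; simp
    rw [h1, h2]
  conv_lhs => rw [key]
  rw [key b, tsum_eq_zero_add' ENNReal.summable]
  congr 1
  · unfold ph
    rw [← ENNReal.tsum_mul_left]
    congr 1; ext t
    rw [zero_add, wt_succ]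
    split_ifs with h
    · rw [pow_add, h, mul_comm]
    · simp
  · congr 1; ext a
    congr 1; ext t
    simp only [show (a + 1 + tot t = b + 1) = (a + tot t = b) by simp; omega]

lemma telescope (q : ℝ≥0∞) (k N : ℕ) :
    ∑ b ∈ range (N+1), (q^b * ph q b * ph q (b+k) + q^(b+k+1) * ph q b * ph q (b+k+1))
      = ph q N * ph q (N+k+1) := by
  induction N with
  | zero =>
    have := ph_succ q k
    simp only [zero_add, range_one, sum_singleton, pow_zero, ph_zero, one_mul]
    rw [mul_one, add_comm]; exact this.symm
  | succ N ih =>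
    rw [sum_range_succ, ih]
    have e1 := ph_succ q N
    have e2 := ph_succ q (N+1+k)
    calc _ = (q^(N+1) * ph q (N+1) + ph q N) * ph q (N+1+k) + q^(N+1+k+1) * ph q (N+1) * ph q (N+1+k+1) := by
            rw [show N + k + 1 = N + 1 + k by ring]; ring
      _ = ph q (N+1) * (q^(N+1+k+1) * ph q (N+1+k+1) + ph q (N+1+k)) := by rw [← e1]; ring
      _ = _ := by rw [← e2]

/-- H_k -/
noncomputable def H (q : ℝ≥0∞) (k : ℕ) : ℝ≥0∞ := ∑' b, q^b * ph q b * ph q (b+k)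

/-- GF of pairs with difference k -/
noncomputable def PX (q : ℝ≥0∞) (k : ℕ) : ℝ≥0∞ :=
  ∑' x : SDP, if tot x.1.1 = tot x.1.2 + k then q ^ tot x.1.2 else 0

lemma PX_eq (q : ℝ≥0∞) (k : ℕ) :
    PX q k * Z (fun j => q^(2*j+1)) = Z (fun j => q^(j+1)) * H q k := by
  have h1 : PX q k * Z (fun j => q^(2*j+1)) = ∑' x : SDP × FS,
      if tot x.1.1.1 = tot x.1.1.2 + k then q ^ (tot x.1.1.2 + wt (fun j => 2*j+1) x.2) else 0 := by
    rw [ENNReal.tsum_prod', ← Z_pow]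
    unfold PX
    rw [← ENNReal.tsum_mul_right]
    congr 1; ext x
    rw [← ENNReal.tsum_mul_left]
    congr 1; ext s
    dsimp only
    split_ifs
    · rw [pow_add]
    · simp
  have h2 : Z (fun j => q^(j+1)) * H q k = ∑' y : FS × (FS × FS),
      if tot y.2.1 = tot y.2.2 + k then q ^ (wt (fun j => j+1) y.1 + wt (fun j => j) y.2.1 + wt (fun j => j+1) y.2.2) else 0 := by
    rw [ENNReal.tsum_prod', ← Z_pow, ← ENNReal.tsum_mul_right]
    congr 1; ext d
    have h3 : H q k = ∑' z : FS × FS, if tot z.1 = tot z.2 + k then q ^ (wt (fun j => j) z.1 + wt (fun j => j+1) z.2) else 0 := by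
      rw [ENNReal.tsum_prod', ENNReal.tsum_comm]
      have h4 : ∀ G : FS, (∑' F : FS, if tot F = tot G + k then q ^ (wt (fun j => j) F + wt (fun j => j+1) G) else 0)
          = ∑' b : ℕ, if tot G = b then q^b * q ^ wt (fun j => j) G * ph q (b+k) else 0 := by
        intro G
        rw [tsum_eq_single (tot G) (by intro b hb; rw [if_neg hb.symm]), if_pos rfl]
        unfold ph
        rw [← ENNReal.tsum_mul_left]
        congr 1; ext F
        rw [wt_succ]
        split_ifs
        · rw [pow_add, pow_add]; ring
        · simp
      dsimp only
      simp_rw [h4]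
      rw [ENNReal.tsum_comm]
      unfold H
      congr 1; ext b
      conv_lhs => rw [ph]
      rw [← ENNReal.tsum_mul_left, ← ENNReal.tsum_mul_right]
      congr 1; ext G
      split_ifs <;> simp
    rw [h3, ← ENNReal.tsum_mul_left]
    congr 1; ext z
    dsimp only
    split_ifs
    · rw [add_assoc, pow_add _ (wt _ d)]
    · simp
  rw [h1, h2, ← (Equiv.ofBijective Psi ⟨Psi_inj, Psi_surj⟩).tsum_eq]
  refine tsum_congr fun x => ?_
  change _ = if tot (Psi x).2.1 = tot (Psi x).2.2 + k then q ^ (wt (fun j => j+1) (Psi x).1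
    + wt (fun j => j) (Psi x).2.1 + wt (fun j => j+1) (Psi x).2.2) else 0
  rw [Psi_wt]
  have := Psi_tot x
  simp only [show (tot (Psi x).2.1 = tot (Psi x).2.2 + k) = (tot x.1.1.1 = tot x.1.1.2 + k) by
    simp only [eq_iff_iff]; omega]

end BipAsy

namespace BipAsy
open ENNReal Filter Topology

/-- fiber -/
abbrev Fib (m n : ℕ) : Type := {x : SDP // tot x.1.1 = m ∧ tot x.1.2 = n}

lemma bip_eq (m n : ℕ) : bipartitePi m n = Nat.card (Fib m n) := by
  unfold bipartitePi
  apply Nat.card_congr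
  refine ⟨fun p => ⟨⟨p.1, p.2.2.2.1⟩, p.2.2.2.2⟩, fun x => ⟨x.1.1, ?_, ?_, x.1.2, x.2⟩, ?_, ?_⟩
  · intro i; have := x.1.2 i; omega
  · intro i; have := x.1.2 i; omega
  · intro p; rfl
  · intro p; rfl

lemma supp_of_anti (s : FS) (h : ∀ i, s (i+1) ≤ s i) : s.support ⊆ range (tot s) := by
  intro i hi
  simp at hi
  have anti : Antitone s := antitone_nat_of_succ_le h
  obtain ⟨N, hN⟩ := exists_bd s
  have h1 : tot s = ∑ j ∈ range (max N (i+1)), s j :=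
    tot_eq_range s fun j hj => hN j (by omega)
  have h2 : ∑ j ∈ range (i+1), 1 ≤ ∑ j ∈ range (i+1), s j := by
    apply Finset.sum_le_sum
    intro j hj
    have : s i ≤ s j := anti (by simp at hj; omega)
    omega
  have h3 : ∑ j ∈ range (i+1), s j ≤ ∑ j ∈ range (max N (i+1)), s j :=
    Finset.sum_le_sum_of_subset (by intro j; simp; omega)
  simp at h2
  simp
  omega

instance fib_fin (m n : ℕ) : Finite (Fib m n) := by
  have hfin : Finite ({s : FS // s ∈ Finset.finsuppAntidiag (range m) m} ×
    {s : FS // s ∈ Finset.finsuppAntidiag (range n) n}) := inferInstance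
  have hmem : ∀ (s : FS), (∀ i, s (i+1) ≤ s i) → s ∈ Finset.finsuppAntidiag (range (tot s)) (tot s) := by
    intro s hs
    have := supp_of_anti s hs
    rw [Finset.mem_finsuppAntidiag]
    refine ⟨?_, this⟩
    exact (Finsupp.sum_of_support_subset s this (fun _ x => x) (by simp)).symm
  have hA : ∀ x : Fib m n, x.1.1.1 ∈ Finset.finsuppAntidiag (range m) m := fun x => by
    have := hmem x.1.1.1 (fun i => by have := x.1.2 i; omega)
    rwa [x.2.1] at this
  have hB : ∀ x : Fib m n, x.1.1.2 ∈ Finset.finsuppAntidiag (range n) n := fun x => by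
    have := hmem x.1.1.2 (fun i => by have := x.1.2 i; omega)
    rwa [x.2.2] at this
  refine Finite.of_injective (fun x : Fib m n => ((⟨x.1.1.1, hA x⟩, ⟨x.1.1.2, hB x⟩) :
    ({s : FS // s ∈ Finset.finsuppAntidiag (range m) m} ×
    {s : FS // s ∈ Finset.finsuppAntidiag (range n) n}))) ?_
  intro x y hxy
  simp only [Prod.mk.injEq, Subtype.mk.injEq] at hxy
  apply Subtype.ext
  apply Subtype.ext
  exact Prod.ext hxy.1 hxy.2

lemma tot_single (a : ℕ) : tot (Finsupp.single 0 a) = a := by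
  unfold tot; simp

lemma bip_mono_left (m n : ℕ) : bipartitePi m n ≤ bipartitePi (m+1) n := by
  rw [bip_eq, bip_eq]
  refine Nat.card_le_card_of_injective (fun x : Fib m n =>
    (⟨⟨(x.1.1.1 + Finsupp.single 0 1, x.1.1.2), ?_⟩, ?_, x.2.2⟩ : Fib (m+1) n)) ?_
  · intro i
    have := x.1.2 i
    simp [Finsupp.single_apply] at *
    split_ifs <;> omega
  · change tot (_ + _) = _
    rw [tot_add, tot_single, x.2.1]
  · intro x y hxy
    have hxy' := congrArg (fun z : Fib (m+1) n => z.1.1) hxy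
    simp only [Prod.mk.injEq] at hxy'
    apply Subtype.ext
    apply Subtype.ext
    exact Prod.ext (add_right_cancel hxy'.1) hxy'.2

lemma bip_comm (m n : ℕ) : bipartitePi m n = bipartitePi n m := by
  rw [bip_eq, bip_eq]
  apply Nat.card_congr
  have : ∀ a b : ℕ → ℕ, SteadilyDecreasing a b → SteadilyDecreasing b a := by
    intro a b h i
    have := h i
    omega
  exact ⟨fun x => ⟨⟨x.1.1.swap, this _ _ x.1.2⟩, x.2.symm⟩,
    fun x => ⟨⟨x.1.1.swap, this _ _ x.1.2⟩, x.2.symm⟩, fun x => rfl, fun x => rfl⟩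

lemma bip_mono_right (m n : ℕ) : bipartitePi m n ≤ bipartitePi m (n+1) := by
  rw [bip_comm m, bip_comm m]; exact bip_mono_left _ _

lemma PX_tsum (q : ℝ≥0∞) (k : ℕ) : PX q k = ∑' n : ℕ, (bipartitePi (n+k) n : ℝ≥0∞) * q^n := by
  unfold PX
  have h1 : ∀ x : SDP, (if tot x.1.1 = tot x.1.2 + k then q ^ tot x.1.2 else 0)
      = ∑' n : ℕ, if tot x.1.1 = n + k ∧ tot x.1.2 = n then q^n else 0 := by
    intro x
    rw [tsum_eq_single (tot x.1.2)]
    · simp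
    · intro n hn
      rw [if_neg]
      rintro ⟨_, h⟩
      exact hn h.symm
  simp_rw [h1]
  rw [ENNReal.tsum_comm]
  congr 1; ext n
  have h2 := tsum_subtype {x : SDP | tot x.1.1 = n + k ∧ tot x.1.2 = n} (fun _ => q^n)
  rw [bip_eq]
  have h3 : ∑' x : SDP, (if tot x.1.1 = n + k ∧ tot x.1.2 = n then q^n else 0)
      = ∑' x : Fib (n+k) n, q^n := by
    rw [show (∑' x : Fib (n+k) n, q^n) = _ from h2]
    congr 1
    ext x
    simp [Set.indicator_apply]
  rw [h3, ENNReal.tsum_const]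
  congr 1
  have := Fintype.ofFinite (Fib (n+k) n)
  simp

/-- real Euler product -/
noncomputable def ER (x : ℝ) : ℝ := ∏' n : ℕ, (1 - x ^ (n+1))
/-- complex Euler product -/
noncomputable def EC (q : ℂ) : ℂ := ∏' n : ℕ, (1 - q ^ (n+1))

lemma EC_tendsto {q : ℂ} (hq : ‖q‖ < 1) :
    Tendsto (fun N => ∏ j ∈ range N, (1 - q^(j+1))) atTop (𝓝 (EC q)) :=
  (ModularForm.multipliable_one_sub_pow hq).hasProd.tendsto_prod_nat

lemma EC_ne {q : ℂ} (hq : ‖q‖ < 1) : EC q ≠ 0 := by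
  unfold EC
  simp_rw [sub_eq_add_neg]
  refine tprod_one_add_ne_zero_of_summable (f := fun n : ℕ ↦ -q^(n+1)) ?_ ?_
  · intro i h
    have h' : q^(i+1) = 1 := by linear_combination -h
    have : ‖q‖^(i+1) = 1 := by rw [← norm_pow, h', norm_one]
    have h2 := pow_lt_one₀ (norm_nonneg q) hq (Nat.succ_ne_zero i)
    simp at h2
    linarith
  · simpa using (summable_nat_add_iff 1).mpr (summable_geometric_of_lt_one (norm_nonneg _) hq)

lemma ER_tendsto_cast {x : ℝ} (h0 : 0 ≤ x) (h1 : x < 1) :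
    Tendsto (fun N => ∏ j ∈ range N, (1 - x^(j+1))) atTop (𝓝 (ER x)) := by
  have : Multipliable fun n : ℕ ↦ 1 - x ^ (n + 1) := by
    simp_rw [sub_eq_add_neg]
    apply multipliable_one_add_of_summable (f := fun n ↦ -x ^ (n + 1))
    have := (summable_nat_add_iff 1).mpr (summable_geometric_of_lt_one h0 h1)
    simpa [abs_of_nonneg h0] using this
  exact this.hasProd.tendsto_prod_nat

lemma ER_cast {x : ℝ} (h0 : 0 ≤ x) (h1 : x < 1) : ((ER x : ℝ) : ℂ) = EC x := by
  have h2 := (Complex.continuous_ofReal.tendsto _).comp (ER_tendsto_cast h0 h1)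
  refine tendsto_nhds_unique h2 ((EC_tendsto (q := x) (by simpa [abs_of_nonneg h0])).congr ?_)
  intro N
  simp

lemma ER_pos {x : ℝ} (h0 : 0 ≤ x) (h1 : x < 1) : 0 < ER x := by
  apply lt_of_le_of_ne
  · refine ge_of_tendsto' (ER_tendsto_cast h0 h1) fun N => Finset.prod_nonneg fun j _ => ?_
    have := pow_le_one₀ (n := j+1) h0 h1.le
    linarith
  · intro h
    have := EC_ne (q := x) (by simpa [abs_of_nonneg h0])
    rw [← ER_cast h0 h1, ← h] at this
    simp at this

lemma Z_real (y : ℕ → ℝ) (h0 : ∀ j, 0 ≤ y j) (h1 : ∀ j, y j < 1) (E : ℝ) (hE : 0 < E)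
    (h : Tendsto (fun N => ∏ j ∈ range N, (1 - y j)) atTop (𝓝 E)) :
    Z (fun j => ENNReal.ofReal (y j)) = ENNReal.ofReal E⁻¹ := by
  refine tendsto_nhds_unique (Z_tendsto _) ?_
  have := (ENNReal.continuous_ofReal.tendsto _).comp (h.inv₀ hE.ne')
  refine this.congr fun N => ?_
  simp only [Function.comp]
  rw [← Finset.prod_inv_distrib, ENNReal.ofReal_prod_of_nonneg]
  · refine Finset.prod_congr rfl fun j _ => ?_
    rw [ENNReal.ofReal_inv_of_pos (by linarith [h1 j]), ENNReal.ofReal_sub _ (h0 j), ENNReal.ofReal_one]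
  · intro j _
    have := h1 j
    exact inv_nonneg.mpr (by linarith)

lemma ph_closed (q : ℝ≥0∞) (hq0 : q ≠ 0) (hq1 : q < 1) (hZ : Z (fun j => q^(j+1)) ≠ ⊤) (b : ℕ) :
    ph q b = ∏ j ∈ range b, (1 - q^(j+1))⁻¹ := by
  have fin : ∀ b, ph q b ≠ ⊤ := by
    intro b hb
    have : q^b * ph q b ≤ Z (fun j => q^(j+1)) := by
      rw [← Z_pow]
      unfold ph
      rw [← ENNReal.tsum_mul_left]
      apply ENNReal.tsum_le_tsum
      intro F
      rw [wt_succ]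
      split_ifs with h
      · rw [pow_add, h, mul_comm]
      · simp
    rw [hb, ENNReal.mul_top (pow_ne_zero _ hq0)] at this
    exact hZ (top_le_iff.mp this)
  induction b with
  | zero => simp [ph_zero]
  | succ b ih =>
    rw [prod_range_succ, ← ih]
    have h1 : q^(b+1) < 1 := pow_lt_one₀ (zero_le) hq1 (Nat.succ_ne_zero b)
    have h2 := ph_succ q b
    have h3 : ph q (b+1) * (1 - q^(b+1)) = ph q b := by
      rw [ENNReal.mul_sub (fun _ _ => fin _), mul_one]
      apply ENNReal.sub_eq_of_eq_add
      · exact ENNReal.mul_ne_top (fin _) (h1.trans one_lt_top).ne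
      · rw [mul_comm _ (q^(b+1)), add_comm (ph q b)]; exact h2
    rw [← h3, mul_assoc, ENNReal.mul_inv_cancel, mul_one]
    · exact (tsub_pos_of_lt h1).ne'
    · exact (lt_of_le_of_lt tsub_le_self one_lt_top).ne

lemma H_sum (q : ℝ≥0∞) (hq0 : q ≠ 0) (hq1 : q < 1) (hZ : Z (fun j => q^(j+1)) ≠ ⊤) (k : ℕ) :
    H q k + q^(k+1) * H q (k+1) = Z (fun j => q^(j+1)) * Z (fun j => q^(j+1)) := by
  have h1 : H q k + q^(k+1) * H q (k+1) =
      ∑' b, (q^b * ph q b * ph q (b+k) + q^(b+k+1) * ph q b * ph q (b+k+1)) := by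
    unfold H
    rw [← ENNReal.tsum_mul_left, ← ENNReal.tsum_add]
    congr 1; ext b
    congr 1
    rw [show b + k + 1 = k + 1 + b by ring, pow_add, show b + (k+1) = k + 1 + b by ring]
    ring
  rw [h1]
  have h2 := (ENNReal.tendsto_nat_tsum (fun b => q^b * ph q b * ph q (b+k) + q^(b+k+1) * ph q b * ph q (b+k+1))).comp (tendsto_add_atTop_nat 1)
  refine tendsto_nhds_unique h2 ?_
  have h3 : Tendsto (ph q) atTop (𝓝 (Z (fun j => q^(j+1)))) :=
    (Z_tendsto _).congr fun N => (ph_closed q hq0 hq1 hZ N).symm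
  have h4 := ENNReal.Tendsto.mul h3 (Or.inr hZ) (h3.comp (tendsto_add_atTop_nat (k+1))) (Or.inr hZ)
  refine h4.congr fun N => ?_
  simp only [Function.comp]
  rw [telescope]; rfl

/-- the sequence A, a priori depending on k -/
noncomputable def B (k n : ℕ) : ℕ :=
  bipartitePi (n+k) n + if k + 1 ≤ n then bipartitePi n (n-(k+1)) else 0

lemma gfB (k : ℕ) {x : ℝ} (h0 : 0 < x) (h1 : x < 1) :
    HasSum (fun n => (B k n : ℝ) * x^n) ((ER x)⁻¹^2 * (ER (x^2))⁻¹) := by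
  set q := ENNReal.ofReal x with hq
  have hq0 : q ≠ 0 := by simp [hq, h0]
  have hq1 : q < 1 := by simpa [hq] using h1
  have hx2 : x^2 < 1 := pow_lt_one₀ h0.le h1 (by norm_num)
  have pE := ER_pos h0.le h1
  have pE2 := ER_pos (sq_nonneg x) hx2
  have hZ1 : Z (fun j => q^(j+1)) = ENNReal.ofReal (ER x)⁻¹ := by
    rw [← Z_real (fun j => x^(j+1)) (fun j => by positivity) (fun j => pow_lt_one₀ h0.le h1 (by simp)) _ pE (ER_tendsto_cast h0.le h1)]
    simp only [hq, ENNReal.ofReal_pow h0.le]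
  have hO : Tendsto (fun N => ∏ j ∈ range N, (1 - x^(2*j+1))) atTop (𝓝 (ER x / ER (x^2))) := by
    have t1 := (ER_tendsto_cast h0.le h1).comp (tendsto_id.const_mul_atTop' (show 0 < 2 by norm_num))
    have t2 := t1.div (ER_tendsto_cast (sq_nonneg x) hx2) pE2.ne'
    refine t2.congr fun N => ?_
    simp only [Function.comp, id, Pi.div_apply]
    have hne : ∏ j ∈ range N, (1 - (x^2)^(j+1)) ≠ 0 := by
      rw [Finset.prod_ne_zero_iff]
      intro j _
      have := pow_lt_one₀ (sq_nonneg x) hx2 (Nat.succ_ne_zero j)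
      simp at this
      exact (by linarith : (0:ℝ) < 1 - (x^2)^(j+1)).ne'
    rw [div_eq_iff hne]
    clear hne t1 t2
    induction N with
    | zero => simp
    | succ N ih =>
      rw [show 2 * (N+1) = 2*N+1+1 by ring, prod_range_succ, prod_range_succ, ih, prod_range_succ, prod_range_succ]
      ring
  have hZ2 : Z (fun j => q^(2*j+1)) = ENNReal.ofReal (ER x / ER (x^2))⁻¹ := by
    rw [← Z_real (fun j => x^(2*j+1)) (fun j => by positivity) (fun j => pow_lt_one₀ h0.le h1 (by simp)) _ (by positivity) hO]
    simp only [hq, ENNReal.ofReal_pow h0.le]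
  have hZ : Z (fun j => q^(j+1)) ≠ ⊤ := by rw [hZ1]; simp
  have e1 : (PX q k + q^(k+1) * PX q (k+1)) * Z (fun j => q^(2*j+1))
      = Z (fun j => q^(j+1)) * (Z (fun j => q^(j+1)) * Z (fun j => q^(j+1))) := by
    rw [← H_sum q hq0 hq1 hZ k, add_mul, PX_eq, mul_assoc, PX_eq]
    ring
  have e2 : PX q k + q^(k+1) * PX q (k+1) = ENNReal.ofReal ((ER x)⁻¹^2 * (ER (x^2))⁻¹) := by
    rw [hZ1, hZ2, ← ENNReal.ofReal_mul (by positivity), ← ENNReal.ofReal_mul (by positivity)] at e1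
    have hne : ENNReal.ofReal (ER x / ER (x^2))⁻¹ ≠ 0 := by
      simp; positivity
    rw [← ENNReal.mul_left_inj hne (by simp), e1, ← ENNReal.ofReal_mul (by positivity)]
    congr 1
    field_simp
  have e3 : PX q k + q^(k+1) * PX q (k+1) = ∑' n, ENNReal.ofReal ((B k n : ℝ) * x^n) := by
    rw [PX_tsum, PX_tsum, ← ENNReal.tsum_mul_left]
    have : ∑' n, q^(k+1) * ((bipartitePi (n+(k+1)) n : ℝ≥0∞) * q^n)
        = ∑' n, (((if k + 1 ≤ n then bipartitePi n (n-(k+1)) else 0 : ℕ) : ℝ≥0∞)) * q^n := by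
      rw [← ENNReal.summable.sum_add_tsum_nat_add' (f := fun n => (((if k + 1 ≤ n then bipartitePi n (n-(k+1)) else 0 : ℕ) : ℝ≥0∞)) * q^n) (k := k+1)]
      rw [Finset.sum_eq_zero, zero_add]
      · congr 1; ext n
        rw [if_pos (by omega), Nat.add_sub_cancel, pow_add]
        ring
      · intro i hi
        rw [if_neg (by simp at hi; omega)]
        simp
    rw [this, ← ENNReal.tsum_add]
    congr 1; ext n
    rw [ENNReal.ofReal_mul (by positivity), ENNReal.ofReal_natCast, ENNReal.ofReal_pow h0.le, ← add_mul]
    unfold B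
    push_cast
    rfl
  have nn : ∀ n, 0 ≤ (B k n : ℝ) * x^n := fun n => by positivity
  have hs : Summable (fun n => (B k n : ℝ) * x^n) := by
    have : ∑' n, ENNReal.ofReal ((B k n : ℝ) * x^n) ≠ ⊤ := by
      rw [← e3, e2]; simp
    have := ENNReal.summable_toReal this
    simpa only [ENNReal.toReal_ofReal (nn _)] using this
  rw [e2, ← ENNReal.ofReal_tsum_of_nonneg nn hs] at e3
  rw [ENNReal.ofReal_eq_ofReal_iff (by positivity) (tsum_nonneg nn)] at e3
  rw [e3]
  exact hs.hasSum

end BipAsy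

namespace BipAsy
open ENNReal Filter Topology

noncomputable def gC (q : ℂ) : ℂ := (EC q)⁻¹^2 * (EC (q^2))⁻¹
noncomputable def gR (x : ℝ) : ℝ := (ER x)⁻¹^2 * (ER (x^2))⁻¹

lemma gR_cast {x : ℝ} (h0 : 0 ≤ x) (h1 : x < 1) : ((gR x : ℝ) : ℂ) = gC x := by
  have h2 : x^2 < 1 := by nlinarith
  unfold gR gC
  push_cast
  rw [ER_cast h0 h1, ER_cast (sq_nonneg x) h2]
  push_cast
  rfl

lemma EC_diff : DifferentiableOn ℂ EC (Metric.ball (0 : ℂ) 1) :=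
  ModularForm.differentiableOn_tprod_one_sub_pow

lemma gC_diff : DifferentiableOn ℂ gC (Metric.ball (0 : ℂ) 1) := by
  have h2 : ∀ q ∈ Metric.ball (0 : ℂ) 1, q^2 ∈ Metric.ball (0 : ℂ) 1 := by
    intro q hq
    simp only [mem_ball_zero_iff, norm_pow] at hq ⊢
    exact pow_lt_one₀ (norm_nonneg _) hq (by simp)
  unfold gC
  refine DifferentiableOn.mul (DifferentiableOn.pow (DifferentiableOn.inv EC_diff ?_) _) (DifferentiableOn.inv (EC_diff.comp (by fun_prop) h2) ?_)
  · intro q hq; exact EC_ne (by simpa using hq)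
  · intro q hq; exact EC_ne (by simpa using h2 q hq)

lemma coef_eq (a : ℕ → ℝ) (ha : ∀ n, 0 ≤ a n)
    (hs : ∀ x : ℝ, 0 < x → x < 1 → HasSum (fun n => a n * x^n) (gR x)) (r : NNReal) (hr0 : 0 < r) (hr1 : r < 1) :
    FormalMultilinearSeries.ofScalars ℂ (fun n => (a n : ℂ)) = cauchyPowerSeries gC 0 r := by
  set p := FormalMultilinearSeries.ofScalars ℂ (fun n => (a n : ℂ)) with hp
  have hrad : 1 ≤ p.radius := by
    refine ENNReal.le_of_forall_nnreal_lt fun x hx => ?_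
    refine p.le_radius_of_summable_norm ?_
    rcases eq_or_lt_of_le (zero_le : 0 ≤ x) with h | h
    · subst h
      refine summable_of_ne_finset_zero (s := {0}) fun n hn => ?_
      simp at hn
      simp [hn]
    · have := (hs x (by exact_mod_cast h) (by exact_mod_cast hx)).summable
      refine this.congr fun n => ?_
      simp [p, FormalMultilinearSeries.ofScalars_norm, abs_of_nonneg (ha n)]
  have hb := p.hasFPowerSeriesOnBall (lt_of_lt_of_le one_pos hrad)
  have hb1 := hb.mono one_pos hrad
  have hfa : AnalyticOnNhd ℂ p.sum (Metric.ball 0 1) := by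
    have := hb1.analyticOnNhd
    rwa [← ENNReal.coe_one, Metric.eball_coe] at this
  have hga : AnalyticOnNhd ℂ gC (Metric.ball 0 1) := gC_diff.analyticOnNhd Metric.isOpen_ball
  have hval : ∀ x : ℝ, 0 < x → x < 1 → p.sum (x : ℂ) = gC x := by
    intro x h0 h1
    rw [← gR_cast h0.le h1]
    unfold FormalMultilinearSeries.sum
    have := Complex.hasSum_ofReal.mpr (hs x h0 h1)
    rw [← this.tsum_eq]
    congr 1; ext n
    rw [hp, FormalMultilinearSeries.ofScalars_apply_eq]
    simp
  have hfreq : ∃ᶠ z in 𝓝[≠] (0:ℂ), p.sum z = gC z := by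
    have ht : Tendsto (fun x : ℝ => (x : ℂ)) (𝓝[>] 0) (𝓝[≠] 0) := by
      refine tendsto_nhdsWithin_iff.mpr ⟨?_, ?_⟩
      · have : Tendsto (fun x : ℝ => (x : ℂ)) (𝓝 0) (𝓝 ((0:ℝ):ℂ)) := Complex.continuous_ofReal.tendsto 0
        simpa using this.mono_left nhdsWithin_le_nhds
      · filter_upwards [self_mem_nhdsWithin] with x hx
        simp at hx
        simp [hx.ne']
    refine ht.frequently (Eventually.frequently ?_)
    filter_upwards [Ioo_mem_nhdsGT (show (0:ℝ) < 1 by norm_num)] with x hx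
    exact hval x hx.1 hx.2
  have heq := hfa.eqOn_of_preconnected_of_frequently_eq hga (convex_ball (0:ℂ) 1).isPreconnected (by simp) hfreq
  have hgp : HasFPowerSeriesOnBall gC (cauchyPowerSeries gC 0 r) 0 r := by
    refine (gC_diff.mono ?_).hasFPowerSeriesOnBall hr0
    exact Metric.closedBall_subset_ball (by exact_mod_cast hr1)
  refine hb.hasFPowerSeriesAt.eq_formalMultilinearSeries_of_eventually hgp.hasFPowerSeriesAt ?_
  filter_upwards [Metric.ball_mem_nhds (0:ℂ) one_pos] with z hz using heq hz

lemma coef_int (a : ℕ → ℝ) (ha : ∀ n, 0 ≤ a n)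
    (hs : ∀ x : ℝ, 0 < x → x < 1 → HasSum (fun n => a n * x^n) (gR x)) (t : ℝ) (ht : 0 < t) (n : ℕ) :
    (a n : ℂ) = (2 * Real.pi : ℂ)⁻¹ * ∫ θ in (-Real.pi)..Real.pi,
      gC (Complex.exp (-(t - Complex.I * θ))) * Complex.exp (n * (t - Complex.I * θ)) := by
  have hr1 : Real.exp (-t) < 1 := by simpa using ht
  have h := coef_eq a ha hs ⟨Real.exp (-t), (Real.exp_pos _).le⟩ (by exact_mod_cast Real.exp_pos _) (by exact_mod_cast hr1)
  have h2 := congrArg (fun p => (p n) (fun _ => (1:ℂ))) h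
  simp only [FormalMultilinearSeries.ofScalars_apply_eq, cauchyPowerSeries_apply] at h2
  simp only [one_pow, smul_eq_mul, mul_one, sub_zero, circleIntegral] at h2
  rw [h2]
  have hz : ∀ θ : ℝ, circleMap 0 (Real.exp (-t)) θ = Complex.exp (-(t - Complex.I * θ)) := by
    intro θ
    rw [circleMap]
    push_cast
    rw [zero_add, ← Complex.exp_add]
    congr 1; ring
  set F : ℝ → ℂ := fun θ => gC (Complex.exp (-(t - Complex.I * θ))) * Complex.exp (n * (t - Complex.I * θ)) with hF
  have hper : Function.Periodic F (2 * Real.pi) := by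
    intro θ
    simp only [hF]
    congr 1
    · congr 1
      rw [Complex.exp_eq_exp_iff_exists_int]
      exact ⟨1, by push_cast; ring⟩
    · rw [Complex.exp_eq_exp_iff_exists_int]
      exact ⟨-n, by push_cast; ring⟩
  have e1 := hper.intervalIntegral_add_eq 0 (-Real.pi)
  have e2 : ∀ θ : ℝ, deriv (circleMap 0 (Real.exp (-t))) θ * ((1 / circleMap 0 (Real.exp (-t)) θ)^n *
    ((circleMap 0 (Real.exp (-t)) θ)⁻¹ * gC (circleMap 0 (Real.exp (-t)) θ))) = Complex.I * F θ := by
    intro θ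
    rw [deriv_circleMap, hz, hF]
    have : Complex.exp (-(t - Complex.I * θ)) ≠ 0 := Complex.exp_ne_zero _
    have e3 : Complex.exp (n * (t - Complex.I * θ)) = (1 / Complex.exp (-(t - Complex.I * θ)))^n := by
      rw [one_div, ← Complex.exp_neg, ← Complex.exp_nat_mul, neg_neg]
    simp only [e3]
    field_simp
  change (2 * Real.pi * Complex.I : ℂ)⁻¹ * ∫ θ in (0:ℝ)..2 * Real.pi, deriv (circleMap 0 (Real.exp (-t))) θ * ((1 / circleMap 0 (Real.exp (-t)) θ)^n *
    ((circleMap 0 (Real.exp (-t)) θ)⁻¹ * gC (circleMap 0 (Real.exp (-t)) θ))) = _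
  simp only [e2]
  rw [intervalIntegral.integral_const_mul]
  rw [zero_add, show -Real.pi + 2 * Real.pi = Real.pi by ring] at e1
  rw [e1]
  have := Complex.I_ne_zero
  have : (Real.pi : ℂ) ≠ 0 := by exact_mod_cast Real.pi_ne_zero
  field_simp

lemma B_const (k n : ℕ) : B k n = B 0 n := by
  have h1 := coef_int (fun n => (B k n : ℝ)) (fun n => by positivity) (fun x h0 h1 => gfB k h0 h1) 1 one_pos n
  have h2 := coef_int (fun n => (B 0 n : ℝ)) (fun n => by positivity) (fun x h0 h1 => gfB 0 h0 h1) 1 one_pos n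
  exact_mod_cast h1.trans h2.symm

noncomputable def A (n : ℕ) : ℕ := B 0 n

lemma A_eq (k n : ℕ) : A n = bipartitePi (n+k) n + if k+1 ≤ n then bipartitePi n (n-(k+1)) else 0 :=
  (B_const k n).symm

lemma A_int (t : ℝ) (ht : 0 < t) (n : ℕ) : 
    (A n : ℂ) = (2 * Real.pi : ℂ)⁻¹ * ∫ θ in (-Real.pi)..Real.pi,
      gC (Complex.exp (-(t - Complex.I * θ))) * Complex.exp (n * (t - Complex.I * θ)) := by
  simpa [A] using coef_int (fun n => (B 0 n : ℝ)) (fun n => by positivity) (fun x h0 h1 => gfB 0 h0 h1) t ht n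

end BipAsy

namespace BipAsy
open ENNReal Filter Topology

open Complex in
lemma EC_transf {τ : ℂ} (hτ : 0 < τ.re) :
    (EC (exp (-τ)))⁻¹ = (τ / (2 * Real.pi)) ^ (2⁻¹ : ℂ) * exp (-τ/24 + Real.pi^2/(6*τ)) *
      (EC (exp (-(4 * Real.pi^2 / τ))))⁻¹ := by
  have hpi : (Real.pi : ℂ) ≠ 0 := by exact_mod_cast Real.pi_ne_zero
  have hτ0 : τ ≠ 0 := by rintro rfl; simp at hτ
  set w : ℂ := τ / (2 * Real.pi) with hw
  have hwre : 0 < w.re := by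
    rw [hw, show (2 * Real.pi : ℂ) = ((2 * Real.pi : ℝ) : ℂ) by push_cast; ring, Complex.div_ofReal_re]
    have := Real.pi_pos
    positivity
  have hw0 : w ≠ 0 := by intro h; rw [h] at hwre; simp at hwre
  have hz : I * w ∈ UpperHalfPlane.upperHalfPlaneSet := by
    change 0 < (I * w).im
    simpa using hwre
  have h := ModularForm.eta_comp_eq_csqrt_I_inv hz
  simp only [Function.comp, Pi.smul_apply, Pi.mul_apply, smul_eq_mul, ModularForm.eta,
    ModularForm.eta_q, Function.Periodic.qParam] at h
  have hsq : Complex.sqrt (I * w) = Complex.sqrt I * w ^ (2⁻¹ : ℂ) := by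
    unfold Complex.sqrt
    have h1 := Complex.abs_arg_lt_pi_div_two_iff.mpr (Or.inl hwre)
    rw [abs_lt] at h1
    have h2 : Complex.log (I * w) = Complex.log I + Complex.log w := by
      apply Complex.log_mul Complex.I_ne_zero hw0
      rw [Complex.arg_I]
      constructor <;> linarith
    rw [Complex.cpow_def_of_ne_zero (mul_ne_zero Complex.I_ne_zero hw0), Complex.cpow_def_of_ne_zero Complex.I_ne_zero,
      Complex.cpow_def_of_ne_zero hw0, h2, add_mul, Complex.exp_add]
  have hI : Complex.sqrt I ≠ 0 := by
    unfold Complex.sqrt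
    simp [Complex.cpow_eq_zero_iff]
  have hws : w ^ (2⁻¹ : ℂ) ≠ 0 := by simp [Complex.cpow_eq_zero_iff, hw0]
  rw [hsq] at h
  have e1 : 2 * (Real.pi:ℂ) * I * (I * w) / (24:ℝ) = -τ/24 := by
    rw [hw]; push_cast; field_simp; rw [Complex.I_sq]
  have e2 : 2 * (Real.pi:ℂ) * I * (I * w) / (1:ℝ) = -τ := by
    rw [hw]; push_cast; field_simp; rw [Complex.I_sq]
  have e3 : 2 * (Real.pi:ℂ) * I * (-1 / (I * w)) / (24:ℝ) = -(Real.pi^2/(6*τ)) := by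
    rw [hw]; push_cast; field_simp; norm_num
  have e4 : 2 * (Real.pi:ℂ) * I * (-1 / (I * w)) / (1:ℝ) = -(4 * Real.pi^2 / τ) := by
    rw [hw]; push_cast; field_simp; norm_num
  rw [e1, e2, e3, e4] at h
  change exp (-(Real.pi^2/(6*τ))) * EC (exp (-(4 * Real.pi^2 / τ))) = (Complex.sqrt I)⁻¹ * (Complex.sqrt I * w ^ (2⁻¹ : ℂ) * (exp (-τ/24) * EC (exp (-τ)))) at h
  have hE1 : EC (exp (-τ)) ≠ 0 := EC_ne (by rw [Complex.norm_exp]; simpa using hτ)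
  have hE2 : EC (exp (-(4 * Real.pi^2 / τ))) ≠ 0 := EC_ne (by
    rw [Complex.norm_exp]
    have : 0 < (4 * Real.pi^2 / τ : ℂ).re := by
      rw [show (4 * Real.pi^2 / τ : ℂ) = ((4 * Real.pi^2 : ℝ) : ℂ) * τ⁻¹ by push_cast; ring, Complex.re_ofReal_mul, Complex.inv_re]
      have := Real.pi_pos
      have := Complex.normSq_pos.mpr hτ0
      positivity
    simpa using this)
  rw [mul_assoc (Complex.sqrt I), inv_mul_cancel_left₀ hI] at h
  rw [Complex.exp_add, show exp (Real.pi^2/(6*τ)) = (exp (-(Real.pi^2/(6*τ))))⁻¹ by rw [← Complex.exp_neg, neg_neg]]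
  have hexp := Complex.exp_ne_zero (-(Real.pi^2/(6*τ)))
  rw [inv_eq_iff_eq_inv, mul_inv, mul_inv, mul_inv, inv_inv, inv_inv]
  have hx := Complex.exp_ne_zero (-τ/24)
  generalize exp (-(Real.pi^2/(6*τ))) = a at *
  generalize exp (-τ/24) = b at *
  generalize w ^ (2⁻¹ : ℂ) = e at *
  rw [mul_assoc, mul_assoc, h]
  field_simp

lemma EC_tendsto_one : Tendsto EC (𝓝 0) (𝓝 1) := by
  have := tendsto_tprod_one_add_of_dominated_convergence (𝓕 := 𝓝 0) (g := 0)
      (f := fun (q : ℂ) (n : ℕ) ↦ -q ^ (n + 1)) (bound := fun n ↦ (1 / 2 : ℝ) ^ (n + 1))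
  simp only [Pi.zero_apply, norm_neg, norm_pow, add_zero, tprod_one] at this
  unfold EC
  simp_rw [sub_eq_add_neg]
  refine this
      (by simpa only [pow_succ'] using (summable_geometric_of_abs_lt_one (by norm_num)).mul_left _)
      (fun k ↦ by simpa using ((continuous_pow (M := ℂ) (k + 1)).tendsto 0).neg) ?_
  filter_upwards [Metric.ball_mem_nhds (0 : ℂ) (by norm_num : (0 : ℝ) < 1 / 2)] with q hq k
  exact pow_le_pow_left₀ (norm_nonneg _) (mem_ball_zero_iff.mp hq).le _

/-- The correction factor. -/
noncomputable def RR (τ : ℂ) : ℂ := (EC (Complex.exp (-(4 * Real.pi^2 / τ))))⁻¹^2 * (EC (Complex.exp (-(2 * Real.pi^2 / τ))))⁻¹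

open Complex in
lemma gC_transf {τ : ℂ} (hτ : 0 < τ.re) :
    gC (exp (-τ)) = (τ / (2 * Real.pi)) * (τ / Real.pi) ^ (2⁻¹ : ℂ) * exp (-τ/6 + 5*Real.pi^2/(12*τ)) * RR τ := by
  unfold gC RR
  have hτ0 : τ ≠ 0 := by rintro rfl; simp at hτ
  have h2 : exp (-τ)^2 = exp (-(2*τ)) := by
    rw [← Complex.exp_nat_mul]; congr 1; push_cast; ring
  rw [h2, EC_transf hτ, EC_transf (τ := 2*τ) (by simpa using hτ)]
  rw [show 4 * (Real.pi:ℂ)^2/(2*τ) = 2*Real.pi^2/τ by field_simp; norm_num,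
    show 2*τ/(2*Real.pi:ℂ) = τ / Real.pi by field_simp]
  rw [mul_pow, mul_pow, ← Complex.exp_nat_mul, ← Complex.cpow_nat_mul]
  rw [show ((2:ℕ):ℂ) * 2⁻¹ = 1 by norm_num, Complex.cpow_one]
  have : exp (-τ/6 + 5*Real.pi^2/(12*τ)) = exp (((2:ℕ):ℂ) * (-τ / 24 + Real.pi ^ 2 / (6 * τ))) * exp (-(2 * τ) / 24 + Real.pi ^ 2 / (6 * (2 * τ))) := by
    rw [← Complex.exp_add]; congr 1; push_cast; field_simp; ring
  rw [this]; ring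

lemma RR_tendsto {ι : Type*} {l : Filter ι} {τ : ι → ℂ} (h : Tendsto (fun i => ((τ i)⁻¹).re) l atTop) :
    Tendsto (fun i => RR (τ i)) l (𝓝 1) := by
  have key : ∀ a : ℝ, 0 < a → Tendsto (fun i => (EC (Complex.exp (-(a / τ i))))⁻¹) l (𝓝 1) := by
    intro a ha
    have h1 : Tendsto (fun i => Complex.exp (-(a / τ i))) l (𝓝 0) := by
      rw [tendsto_zero_iff_norm_tendsto_zero]
      simp only [Complex.norm_exp, div_eq_mul_inv, Complex.neg_re, Complex.re_ofReal_mul]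
      exact Real.tendsto_exp_neg_atTop_nhds_zero.comp (h.const_mul_atTop ha)
    simpa using (EC_tendsto_one.comp h1).inv₀ (by simp)
  have k1 := key (4 * Real.pi^2) (by have := Real.pi_pos; positivity)
  have k2 := key (2 * Real.pi^2) (by have := Real.pi_pos; positivity)
  push_cast at k1 k2
  simpa [RR] using (k1.pow 2).mul k2

lemma RR_bound : ∃ K : ℝ, ∀ τ : ℂ, K ≤ (τ⁻¹).re → ‖RR τ‖ ≤ 2 := by
  have h : Tendsto (fun τ : ℂ => RR τ) (Filter.comap (fun τ : ℂ => (τ⁻¹).re) atTop) (𝓝 1) :=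
    RR_tendsto tendsto_comap
  have h2 := h.norm
  simp only [norm_one] at h2
  have h3 := h2.eventually_le_const (show (1:ℝ) < 2 by norm_num)
  rw [Filter.eventually_comap] at h3
  obtain ⟨K, hK⟩ := Filter.eventually_atTop.mp h3
  exact ⟨K, fun τ hτ => hK _ hτ τ rfl⟩

end BipAsy

namespace BipAsy
open ENNReal Filter Topology

lemma factor {z : ℂ} (hz : ‖z‖ < 1) : (1 - ‖z‖) * Real.exp (‖z‖ - z.re) ≤ ‖1 - z‖ := by
  have h1 : z ≠ 1 := by rintro rfl; simp at hz
  have hne : 1 - z ≠ 0 := sub_ne_zero.mpr h1.symm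
  have hC := Complex.hasSum_taylorSeries_neg_log hz
  have hRe := Complex.hasSum_re hC
  have hR := Real.hasSum_pow_div_log_of_abs_lt_one (x := ‖z‖) (by simpa using hz)
  have hC' := (hasSum_nat_add_iff' 1).mpr hRe
  have e : Real.log (1 - ‖z‖) + ‖z‖ ≤ Real.log ‖1 - z‖ + z.re := by
    have hR0 : HasSum (fun n : ℕ => ‖z‖^(n+1)/((n+1 : ℕ) : ℝ)) (-Real.log (1-‖z‖)) := by simpa using hR
    have hR1 := (hasSum_nat_add_iff' 1).mpr hR0
    have hC1 := (hasSum_nat_add_iff' 2).mpr hRe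
    have := hasSum_le (fun n => ?_) hC1 hR1
    · simp [Finset.sum_range_succ, Complex.log_re] at this
      linarith
    · rw [show n + 2 = n+1+1 by ring]
      rw [show ((n+1+1:ℕ):ℂ) = ((n+1+1:ℕ):ℝ) by push_cast; rfl, Complex.div_ofReal_re]
      gcongr
      exact (Complex.re_le_norm _).trans (by rw [norm_pow])
  calc (1 - ‖z‖) * Real.exp (‖z‖ - z.re) = Real.exp (Real.log (1 - ‖z‖) + (‖z‖ - z.re)) := by
        rw [Real.exp_add, Real.exp_log (by linarith)]
    _ ≤ Real.exp (Real.log ‖1 - z‖) := Real.exp_le_exp.mpr (by linarith)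
    _ = ‖1 - z‖ := Real.exp_log (norm_pos_iff.mpr hne)

lemma EC_lower {q : ℂ} (hq : ‖q‖ < 1) :
    ER ‖q‖ * Real.exp (‖q‖/(1-‖q‖) - (q/(1-q)).re) ≤ ‖EC q‖ := by
  have hE : Tendsto (fun N => ‖∏ j ∈ range N, (1 - q^(j+1))‖) atTop (𝓝 ‖EC q‖) := (EC_tendsto hq).norm
  have hR : Tendsto (fun N => ∏ j ∈ range N, (1 - ‖q‖^(j+1))) atTop (𝓝 (ER ‖q‖)) := by
    have := EC_tendsto (q := ((‖q‖:ℝ):ℂ)) (by simpa using hq)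
    rw [← ER_cast (norm_nonneg q) hq] at this
    have h2 := (Complex.continuous_re.tendsto _).comp this
    simp only [Complex.ofReal_re] at h2
    refine h2.congr fun N => ?_
    simp only [Function.comp]
    rw [← Complex.ofReal_re (∏ j ∈ range N, (1 - ‖q‖^(j+1)))]
    push_cast; rfl
  have g1 := (hasSum_geometric_of_lt_one (norm_nonneg q) hq).mul_left ‖q‖
  have g2 := Complex.hasSum_re ((hasSum_geometric_of_norm_lt_one hq).mul_left q)
  have g3 := (g1.sub g2).tendsto_sum_nat
  have h := hR.mul ((Real.continuous_exp.tendsto _).comp g3)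
  rw [div_eq_mul_inv, div_eq_mul_inv]
  refine le_of_tendsto_of_tendsto' h hE fun N => ?_
  simp only [Function.comp]
  rw [norm_prod, Real.exp_sum, ← Finset.prod_mul_distrib]
  refine Finset.prod_le_prod (fun j _ => ?_) fun j _ => ?_
  · have := pow_le_one₀ (n := j+1) (norm_nonneg q) hq.le
    have : 0 ≤ 1 - ‖q‖^(j+1) := by linarith
    positivity
  · have := factor (z := q^(j+1)) (by rw [norm_pow]; exact pow_lt_one₀ (norm_nonneg _) hq (by simp))
    rw [norm_pow] at this
    rwa [← pow_succ', ← pow_succ']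

lemma re_le {q : ℂ} : (q/(1-q)).re ≤ ‖q‖/‖1-q‖ := by
  rw [← norm_div]; exact Complex.re_le_norm _

lemma EC_lower0 {q : ℂ} (hq : ‖q‖ < 1) : ER ‖q‖ ≤ ‖EC q‖ := by
  refine le_trans ?_ (EC_lower hq)
  have h1 : 1 - ‖q‖ ≤ ‖1 - q‖ := by simpa using norm_sub_norm_le (1:ℂ) q
  have h2 : ‖q‖/‖1-q‖ ≤ ‖q‖/(1-‖q‖) := by
    apply div_le_div_of_nonneg_left (norm_nonneg _) (by linarith) h1
  have h3 := re_le (q := q)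
  have h4 : 1 ≤ Real.exp (‖q‖/(1-‖q‖) - (q/(1-q)).re) := Real.one_le_exp (by linarith)
  have := ER_pos (norm_nonneg q) hq
  nlinarith

lemma gC_minor {t θ : ℝ} (ht : 0 < t) (hr : 1/2 ≤ Real.exp (-t)) (h1 : t ≤ |θ|) (h2 : |θ| ≤ Real.pi) :
    ‖gC (Complex.exp (-(t - Complex.I * θ)))‖ ≤ gR (Real.exp (-t)) * Real.exp (-(0.08/t)) := by
  set q := Complex.exp (-(t - Complex.I * θ)) with hqd
  set r := Real.exp (-t) with hrd
  have hqn : ‖q‖ = r := by rw [hqd, Complex.norm_exp]; simp [hrd]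
  have hr1 : r < 1 := by simpa [hrd] using ht
  have hq : ‖q‖ < 1 := by rwa [hqn]
  have hr0 : 0 < r := by linarith
  have h1r : 1 - r ≤ t := by
    have := Real.add_one_le_exp (-t)
    linarith
  have hsq : ‖1 - q‖^2 = (1-r)^2 + 2*r*(1 - Real.cos θ) := by
    have hre : q.re = r * Real.cos θ := by rw [hqd, Complex.exp_re]; simp [hrd]
    have him : q.im = r * Real.sin θ := by rw [hqd, Complex.exp_im]; simp [hrd]
    rw [← Complex.normSq_eq_norm_sq, Complex.normSq_apply]
    simp only [Complex.sub_re, Complex.sub_im, Complex.one_re, Complex.one_im, hre, him]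
    nlinarith [Real.sin_sq_add_cos_sq θ]
  have hcos := Real.cos_le_one_sub_mul_cos_sq h2
  have hpi : 1/10 ≤ 1/Real.pi^2 := by
    apply one_div_le_one_div_of_le (by positivity)
    nlinarith [Real.pi_lt_d2, Real.pi_pos]
  have hθ : t^2 ≤ θ^2 := by rw [← sq_abs θ]; gcongr
  have hlow : 1.2 * (1-r)^2 ≤ ‖1 - q‖^2 := by
    rw [hsq]
    have a1 : (1-r)^2 ≤ θ^2 := le_trans (by gcongr) hθ
    have a2 : 0.2 * θ^2 ≤ 1 - Real.cos θ := by
      have : 2/Real.pi^2 * θ^2 ≥ 0.2 * θ^2 := by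
        gcongr
        rw [show 2/Real.pi^2 = 2 * (1/Real.pi^2) by ring]; linarith
      linarith
    have a3 : 0.2 * (1-r)^2 ≤ 1 - Real.cos θ := by linarith
    nlinarith [sq_nonneg (1-r)]
  have hlow2 : 1.09 * (1-r) ≤ ‖1-q‖ := by
    apply le_of_sq_le_sq _ (norm_nonneg _)
    nlinarith [sq_nonneg (1-r)]
  have hgain : 0.04/t ≤ ‖q‖/(1-‖q‖) - (q/(1-q)).re := by
    have := re_le (q := q)
    rw [hqn] at this ⊢
    have b1 : r/‖1-q‖ ≤ r/(1.09*(1-r)) := by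
      apply div_le_div_of_nonneg_left hr0.le (by nlinarith) hlow2
    have b2 : r/(1.09*(1-r)) = (r/(1-r))/1.09 := by
      have : 1 - r ≠ 0 := by linarith
      field_simp
    have b3 : 0.5/t ≤ r/(1-r) := by
      apply div_le_div₀ hr0.le (by linarith) (by linarith) h1r
    have b4 : 0.04/t = 0.08*(0.5/t) := by ring
    have b5 : (r/(1-r))/1.09 ≤ 0.92 * (r/(1-r)) := by
      have : 0 < r/(1-r) := div_pos hr0 (by linarith)
      rw [div_le_iff₀ (by norm_num)]; nlinarith
    rw [b4]; linarith
  have hE := EC_lower hq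
  have hE' : ER r * Real.exp (0.04/t) ≤ ‖EC q‖ := by
    refine le_trans ?_ hE
    rw [hqn]
    rw [hqn] at hgain
    have := ER_pos hr0.le hr1
    gcongr
  have hr2 : r^2 < 1 := by nlinarith
  have hE2 : ER (r^2) ≤ ‖EC (q^2)‖ := by
    have := EC_lower0 (q := q^2) (by rwa [norm_pow, hqn])
    rwa [norm_pow, hqn] at this
  have p1 := ER_pos hr0.le hr1
  have p2 := ER_pos (sq_nonneg r) hr2
  unfold gC gR
  rw [norm_mul, norm_pow, norm_inv, norm_inv]
  have e1 : ‖EC q‖⁻¹ ≤ (ER r)⁻¹ * Real.exp (-(0.04/t)) := by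
    rw [Real.exp_neg, ← mul_inv]
    exact inv_anti₀ (by positivity) hE'
  have e2 : ‖EC (q^2)‖⁻¹ ≤ (ER (r^2))⁻¹ := inv_anti₀ p2 hE2
  calc ‖EC q‖⁻¹^2 * ‖EC (q^2)‖⁻¹ ≤ ((ER r)⁻¹ * Real.exp (-(0.04/t)))^2 * (ER (r^2))⁻¹ := by gcongr
    _ = _ := by
      rw [mul_pow, ← Real.exp_nat_mul, show ((2:ℕ):ℝ) * -(0.04/t) = -(0.08/t) by push_cast; ring]
      ring

end BipAsy

namespace BipAsy
open ENNReal Filter Topology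

noncomputable def Bc : ℝ := Real.pi * Real.sqrt (5/12)
lemma Bc_pos : 0 < Bc := by unfold Bc; have := Real.pi_pos; positivity
lemma Bc_sq : Bc^2 = 5*Real.pi^2/12 := by
  unfold Bc; rw [mul_pow, Real.sq_sqrt (by norm_num)]; ring

noncomputable def uu (L v : ℝ) : ℂ := 1 - Complex.I * ((v/L : ℝ) : ℂ)
noncomputable def tau (L v : ℝ) : ℂ := ((Bc/L^2 : ℝ) : ℂ) * uu L v
noncomputable def J (L v : ℝ) : ℂ :=
  (((2*Real.pi)⁻¹ * Bc * L^3 * Real.exp (-2*Bc*L^2) : ℝ) : ℂ) * (gC (Complex.exp (-tau L v)) * Complex.exp (L^4 * tau L v))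

lemma tau_re (L v : ℝ) : (tau L v).re = Bc/L^2 := by
  unfold tau uu; rw [Complex.re_ofReal_mul]; simp

lemma uu_ne (L v : ℝ) : uu L v ≠ 0 := by
  intro h; have := congrArg Complex.re h; simp [uu] at this

lemma uu_inv_re (L v : ℝ) : ((uu L v)⁻¹).re = (1 + (v/L)^2)⁻¹ := by
  rw [Complex.inv_re, Complex.normSq_apply]
  simp [uu, -Complex.ofReal_div]
  ring_nf

lemma tau_inv_re (L v : ℝ) : ((tau L v)⁻¹).re = L^2/Bc * (1 + (v/L)^2)⁻¹ := by
  unfold tau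
  rw [mul_inv, ← Complex.ofReal_inv, Complex.re_ofReal_mul, uu_inv_re, inv_div]

lemma J_int (n : ℕ) (L : ℝ) (hL : 0 < L) (hn : L^4 = n) :
    (((A n : ℝ) * L^6 * Real.exp (-2*Bc*L^2) : ℝ) : ℂ) =
      ∫ v, Set.indicator (Set.Ioc (-(Real.pi*L^3/Bc)) (Real.pi*L^3/Bc)) (J L) v := by
  have hB := Bc_pos
  have hpi := Real.pi_pos
  rw [MeasureTheory.integral_indicator measurableSet_Ioc,
    ← intervalIntegral.integral_of_le (by have : 0 < Real.pi*L^3/Bc := by positivity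
                                          linarith)]
  push_cast
  rw [A_int (Bc/L^2) (by positivity) n]
  have hs := intervalIntegral.smul_integral_comp_mul_left (a := -(Real.pi*L^3/Bc)) (b := Real.pi*L^3/Bc)
    (fun θ : ℝ => gC (Complex.exp (-(((Bc/L^2 : ℝ):ℂ) - Complex.I * θ))) * Complex.exp (n * (((Bc/L^2 : ℝ):ℂ) - Complex.I * θ))) (Bc/L^3)
  rw [show Bc/L^3 * -(Real.pi*L^3/Bc) = -Real.pi by field_simp, show Bc/L^3 * (Real.pi*L^3/Bc) = Real.pi by field_simp] at hs
  rw [← hs]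
  have hL0 : (L:ℂ) ≠ 0 := by exact_mod_cast hL.ne'
  have ht : ∀ v : ℝ, ((Bc/L^2 : ℝ):ℂ) - Complex.I * ((Bc/L^3*v : ℝ) : ℂ) = tau L v := by
    intro v
    unfold tau uu
    push_cast
    field_simp
  simp only [ht]
  unfold J
  rw [intervalIntegral.integral_const_mul]
  rw [show (n:ℂ) = (L:ℂ)^4 by exact_mod_cast hn.symm]
  rw [Complex.real_smul]
  push_cast
  field_simp

noncomputable def K0 : ℝ := ((2*Real.pi)⁻¹)^2 * Bc^2 * Real.sqrt (Bc/Real.pi)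
lemma K0_pos : 0 < K0 := by
  unfold K0; have := Real.pi_pos; have := Bc_pos; positivity

open Complex in
lemma J_eq (L v : ℝ) (hL : 0 < L) :
    J L v = K0 * (uu L v * (uu L v)^(2⁻¹ : ℂ) * exp (-tau L v/6) * RR (tau L v) * exp (-(((Bc * v^2 : ℝ) : ℂ) * (uu L v)⁻¹))) := by
  have hB := Bc_pos
  have hpi := Real.pi_pos
  have hre : 0 < (tau L v).re := by rw [tau_re]; positivity
  have hL0 : (L:ℂ) ≠ 0 := by exact_mod_cast hL.ne'
  have hB0 : (Bc:ℂ) ≠ 0 := by exact_mod_cast hB.ne'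
  have hp0 : (Real.pi:ℂ) ≠ 0 := by exact_mod_cast hpi.ne'
  have hu := uu_ne L v
  unfold J
  rw [gC_transf hre]
  have e1 : (tau L v / Real.pi)^(2⁻¹ : ℂ) = ((Real.sqrt (Bc/Real.pi) / L : ℝ) : ℂ) * (uu L v)^(2⁻¹ : ℂ) := by
    have : tau L v / Real.pi = ((Bc/(L^2*Real.pi) : ℝ):ℂ) * uu L v := by
      unfold tau; push_cast; field_simp
    rw [this]
    have hpos : 0 < Bc/(L^2*Real.pi) := by positivity
    rw [Complex.cpow_def_of_ne_zero (mul_ne_zero (by exact_mod_cast hpos.ne') hu), Complex.log_ofReal_mul hpos hu,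
      add_mul, Complex.exp_add, ← Complex.cpow_def_of_ne_zero hu]
    congr 1
    have : Real.sqrt (Bc/Real.pi) / L = Real.exp (Real.log (Bc/(L^2*Real.pi)) * 2⁻¹) := by
      rw [← Real.rpow_def_of_pos hpos, show (2⁻¹:ℝ) = 1/2 by norm_num, ← Real.sqrt_eq_rpow,
        show Bc/(L^2*Real.pi) = (Bc/Real.pi)/L^2 by field_simp, Real.sqrt_div (show 0 ≤ Bc/Real.pi by positivity) (L^2), Real.sqrt_sq hL.le]
    rw [this]; push_cast; rfl
  rw [e1]
  have e2 : exp (-tau L v / 6 + 5*Real.pi^2/(12*tau L v)) * exp (L^4 * tau L v)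
    = exp (-tau L v / 6) * exp (((2*Bc*L^2 : ℝ)) : ℂ) * exp (-(((Bc * v^2 : ℝ) : ℂ) * (uu L v)⁻¹)) := by
    rw [← Complex.exp_add, ← Complex.exp_add, ← Complex.exp_add]
    congr 1
    have h5 : (5*Real.pi^2 : ℂ) = 12 * Bc^2 := by
      have := Bc_sq
      have : 5 * Real.pi^2 = 12 * Bc^2 := by rw [this]; ring
      exact_mod_cast this
    rw [h5]
    have hv : (v : ℂ) = I * (L * (uu L v - 1)) := by
      unfold uu; push_cast; field_simp
      linear_combination (v:ℂ) * Complex.I_sq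
    have hv2 : (v:ℂ)^2 = - (L^2 * (uu L v - 1)^2) := by
      calc (v:ℂ)^2 = (I * (L * (uu L v - 1)))^2 := congrArg (fun x => x^2) hv
        _ = _ := by rw [mul_pow, Complex.I_sq]; ring
    unfold tau
    push_cast
    rw [hv2]
    field_simp
    ring
  have e3 : exp (((2*Bc*L^2 : ℝ)) : ℂ) * ((Real.exp (-2*Bc*L^2) : ℝ) : ℂ) = 1 := by
    rw [Complex.ofReal_exp, ← Complex.exp_add]; push_cast; ring_nf; simp
  have e4 : (tau L v) * ((Real.sqrt (Bc/Real.pi) / L : ℝ) : ℂ) * (L:ℂ)^3 = (Bc * Real.sqrt (Bc/Real.pi)) * uu L v := by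
    unfold tau; push_cast; field_simp
  unfold K0
  simp only [Complex.ofReal_mul, Complex.ofReal_pow, Complex.ofReal_inv, Complex.ofReal_ofNat] at *
  generalize exp (-tau L v / 6 + 5*Real.pi^2/(12*tau L v)) = X1 at *
  generalize exp (L^4 * tau L v) = X2 at *
  generalize exp (-tau L v / 6) = X3 at *
  generalize ((Real.exp (-2*Bc*L^2) : ℝ) : ℂ) = X4 at *
  generalize RR (tau L v) = X5 at *
  generalize tau L v = T at *
  generalize ((Real.sqrt (Bc/Real.pi) / L : ℝ) : ℂ) = X6 at *
  calc _ = ((2 * (Real.pi:ℂ))⁻¹)^2 * Bc * (T * X6 * L^3) * uu L v ^ (2⁻¹:ℂ) * X4 * X5 * (X1 * X2) := by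
        rw [div_eq_mul_inv]; ring
    _ = _ := by
        rw [e2, e4]
        linear_combination (((2 * (Real.pi:ℂ))⁻¹)^2 * Bc * ((Bc * Real.sqrt (Bc/Real.pi)) * uu L v) * uu L v ^ (2⁻¹:ℂ) * X5 * X3 * exp (-(Bc * v^2 * (uu L v)⁻¹))) * e3

lemma J_lim (v : ℝ) : Tendsto (fun L => J L v) atTop (𝓝 ((K0 * Real.exp (-Bc * v^2) : ℝ) : ℂ)) := by
  have hB := Bc_pos
  have h0 : Tendsto (fun L : ℝ => v/L) atTop (𝓝 0) := tendsto_const_nhds.div_atTop tendsto_id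
  have hu : Tendsto (fun L => uu L v) atTop (𝓝 1) := by
    have := ((Complex.continuous_ofReal.tendsto 0).comp h0).const_mul Complex.I |>.const_sub 1
    simpa [uu] using this
  have hs : Tendsto (fun L => (uu L v)^(2⁻¹:ℂ)) atTop (𝓝 1) := by
    have := hu.cpow (tendsto_const_nhds (x := (2⁻¹:ℂ))) (by simp)
    simpa using this
  have ht : Tendsto (fun L => tau L v) atTop (𝓝 0) := by
    have h1 : Tendsto (fun L : ℝ => Bc/L^2) atTop (𝓝 0) := tendsto_const_nhds.div_atTop (tendsto_pow_atTop (by norm_num))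
    simpa [tau] using ((Complex.continuous_ofReal.tendsto 0).comp h1).mul hu
  have he : Tendsto (fun L => Complex.exp (-tau L v/6)) atTop (𝓝 1) := by
    have := (Complex.continuous_exp.tendsto _).comp (ht.neg.div_const 6)
    simpa [Function.comp_def] using this
  have hR : Tendsto (fun L => RR (tau L v)) atTop (𝓝 1) := by
    apply RR_tendsto
    simp only [tau_inv_re]
    refine Tendsto.atTop_mul_pos (C := 1) one_pos ?_ ?_
    · exact (tendsto_pow_atTop (by norm_num)).atTop_div_const hB
    · simpa using ((h0.pow 2).const_add 1).inv₀ (by simp)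
  have hx : Tendsto (fun L => Complex.exp (-(((Bc * v^2 : ℝ) : ℂ) * (uu L v)⁻¹))) atTop (𝓝 (Complex.exp (-((Bc * v^2 : ℝ) : ℂ)))) := by
    have := (Complex.continuous_exp.tendsto _).comp ((hu.inv₀ one_ne_zero).const_mul ((Bc * v^2 : ℝ) : ℂ)).neg
    simpa [Function.comp_def] using this
  have hall := ((((hu.mul hs).mul he).mul hR).mul hx).const_mul (K0 : ℂ)
  have : ((K0 * Real.exp (-Bc * v^2) : ℝ) : ℂ) = K0 * (1 * 1 * 1 * 1 * Complex.exp (-((Bc * v^2 : ℝ) : ℂ))) := by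
    push_cast; ring_nf
  rw [this]
  refine hall.congr' ?_
  filter_upwards [eventually_gt_atTop 0] with L hL
  rw [J_eq L v hL]

lemma J_major : ∃ L0 : ℝ, 0 < L0 ∧ ∀ L v : ℝ, L0 ≤ L → |v| ≤ L → ‖J L v‖ ≤ 8 * K0 * Real.exp (-(Bc/2) * v^2) := by
  have hB := Bc_pos
  obtain ⟨K, hK⟩ := RR_bound
  refine ⟨max 1 (2*Bc*|K|), by positivity, fun L v hL hv => ?_⟩
  have hL1 : 1 ≤ L := (le_max_left _ _).trans hL
  have hL2 : 2*Bc*|K| ≤ L := (le_max_right _ _).trans hL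
  have hL0 : 0 < L := by linarith
  have hu1 : (v/L)^2 ≤ 1 := by
    rw [sq_le_one_iff_abs_le_one, abs_div, abs_of_pos hL0, div_le_one hL0]; exact hv
  have hi : (1/2 : ℝ) ≤ (1 + (v/L)^2)⁻¹ := by
    rw [one_div]; apply inv_anti₀ (by positivity); linarith
  rw [J_eq L v hL0]
  have n1 : ‖uu L v‖ ≤ 2 := by
    unfold uu
    refine (norm_sub_le _ _).trans ?_
    rw [norm_mul, Complex.norm_I, norm_one, Complex.norm_real, Real.norm_eq_abs]
    have := abs_le_of_sq_le_sq (a := v/L) (b := 1) (by simpa using hu1) (by norm_num)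
    linarith
  have n2 : ‖(uu L v)^(2⁻¹:ℂ)‖ ≤ 2 := by
    have h : ((uu L v)^(2⁻¹:ℂ))^2 = uu L v := by
      rw [← Complex.cpow_nat_mul]; simp
    have h2 := congrArg norm h
    rw [norm_pow] at h2
    nlinarith [norm_nonneg ((uu L v)^(2⁻¹:ℂ))]
  have n3 : ‖Complex.exp (-tau L v/6)‖ ≤ 1 := by
    rw [Complex.norm_exp, Real.exp_le_one_iff]
    rw [show -tau L v/6 = ((-(1/6) : ℝ):ℂ) * tau L v by push_cast; ring, Complex.re_ofReal_mul, tau_re]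
    have : 0 < Bc/L^2 := by positivity
    linarith
  have n4 : ‖RR (tau L v)‖ ≤ 2 := by
    apply hK
    rw [tau_inv_re]
    have : |K| ≤ L^2/Bc * (1/2) := by
      rw [div_mul_eq_mul_div, le_div_iff₀ hB]; nlinarith
    have h3 : L^2/Bc * (1/2) ≤ L^2/Bc * (1 + (v/L)^2)⁻¹ := by gcongr
    linarith [le_abs_self K]
  have n5 : ‖Complex.exp (-(((Bc * v^2 : ℝ) : ℂ) * (uu L v)⁻¹))‖ ≤ Real.exp (-(Bc/2) * v^2) := by
    rw [Complex.norm_exp, Real.exp_le_exp, Complex.neg_re, Complex.re_ofReal_mul, uu_inv_re]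
    have : Bc * v^2 * (1/2) ≤ Bc * v^2 * (1 + (v/L)^2)⁻¹ := by gcongr
    linarith
  rw [norm_mul, norm_mul, norm_mul, norm_mul, norm_mul, Complex.norm_real, Real.norm_of_nonneg K0_pos.le]
  have := K0_pos
  calc _ ≤ K0 * (2 * 2 * 1 * 2 * Real.exp (-(Bc/2) * v^2)) := by gcongr
    _ = _ := by ring

lemma J_norm (L v : ℝ) (hL : 0 < L) : ‖J L v‖ = ((2*Real.pi)⁻¹ * Bc * L^3 * Real.exp (-2*Bc*L^2)) * (‖gC (Complex.exp (-tau L v))‖ * Real.exp (Bc*L^2)) := by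
  have hB := Bc_pos
  have hpi := Real.pi_pos
  unfold J
  rw [norm_mul, norm_mul, Complex.norm_real, Real.norm_of_nonneg (by positivity), Complex.norm_exp (L^4 * tau L v)]
  rw [show (L:ℂ)^4 * tau L v = ((L^4:ℝ):ℂ) * tau L v by push_cast; rfl, Complex.re_ofReal_mul, tau_re,
    show L^4 * (Bc/L^2) = Bc*L^2 by field_simp]

lemma J_minor : ∃ L0 C : ℝ, 0 < L0 ∧ 0 < C ∧ ∀ L v : ℝ, L0 ≤ L → L ≤ |v| → |v| ≤ Real.pi*L^3/Bc → ‖J L v‖ ≤ C * (1+v^2)⁻¹ := by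
  have hB := Bc_pos
  have hpi := Real.pi_pos
  have hK := K0_pos
  obtain ⟨L0, hL0, hmaj⟩ := J_major
  set δ := 0.08/Bc with hδ
  have hδ0 : 0 < δ := by positivity
  refine ⟨max L0 (max 1 (2*Bc)), 8*K0*(1 + (Real.pi/Bc)^2*(6/δ^3)), by positivity, by positivity, fun L v hL h1 h2 => ?_⟩
  have hLL : L0 ≤ L := (le_max_left _ _).trans hL
  have hL1 : 1 ≤ L := ((le_max_left _ _).trans (le_max_right _ _)).trans hL
  have hL2 : 2*Bc ≤ L := ((le_max_right _ _).trans (le_max_right _ _)).trans hL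
  have hLp : 0 < L := by linarith
  have h0 := hmaj L 0 hLL (by simpa using hLp.le)
  simp only [ne_eq, OfNat.ofNat_ne_zero, not_false_eq_true, zero_pow, mul_zero, Real.exp_zero, mul_one] at h0
  set t := Bc/L^2 with ht
  have ht0 : 0 < t := by positivity
  have hgm : ‖gC (Complex.exp (-tau L v))‖ ≤ gR (Real.exp (-t)) * Real.exp (-(0.08/t)) := by
    have e : tau L v = t - Complex.I * ((t * (v/L) : ℝ) : ℂ) := by
      unfold tau uu; rw [← ht]; push_cast; ring
    rw [e]
    apply gC_minor ht0
    · have := Real.add_one_le_exp (-t)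
      have : t ≤ 1/2 := by
        rw [ht, div_le_iff₀ (by positivity)]; nlinarith
      linarith
    · rw [abs_mul, abs_of_pos ht0, abs_div, abs_of_pos hLp]
      have : 1 ≤ |v|/L := by rwa [one_le_div hLp]
      nlinarith
    · rw [abs_mul, abs_of_pos ht0, abs_div, abs_of_pos hLp, ht]
      calc Bc/L^2 * (|v|/L) ≤ Bc/L^2 * ((Real.pi*L^3/Bc)/L) := by gcongr
        _ = Real.pi := by field_simp
  have hg0 : ‖gC (Complex.exp (-tau L 0))‖ = gR (Real.exp (-t)) := by
    have e : Complex.exp (-tau L 0) = ((Real.exp (-t) : ℝ) : ℂ) := by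
      unfold tau uu; rw [← ht]; simp
    have l1 : Real.exp (-t) < 1 := by simpa using ht0
    rw [e, ← gR_cast (Real.exp_pos _).le l1, Complex.norm_real, Real.norm_of_nonneg]
    unfold gR
    have := ER_pos (sq_nonneg (Real.exp (-t))) (by nlinarith [Real.exp_pos (-t)])
    positivity
  have hJ : ‖J L v‖ ≤ ‖J L 0‖ * Real.exp (-(δ*L^2)) := by
    rw [J_norm L v hLp, J_norm L 0 hLp, hg0]
    have : 0.08/t = δ*L^2 := by rw [ht, hδ]; field_simp
    rw [this] at hgm
    calc _ ≤ ((2*Real.pi)⁻¹ * Bc * L^3 * Real.exp (-2*Bc*L^2)) * ((gR (Real.exp (-t)) * Real.exp (-(δ*L^2))) * Real.exp (Bc*L^2)) := by gcongr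
      _ = _ := by ring
  have hpoly : (1+v^2) * Real.exp (-(δ*L^2)) ≤ 1 + (Real.pi/Bc)^2*(6/δ^3) := by
    have x1 : Real.exp (-(δ*L^2)) ≤ 1 := by rw [Real.exp_le_one_iff]; have : 0 < δ*L^2 := by positivity
                                            linarith
    have x2 : v^2 ≤ (Real.pi/Bc)^2 * (L^2)^3 := by
      rw [← sq_abs v]
      calc |v|^2 ≤ (Real.pi*L^3/Bc)^2 := by gcongr
        _ = _ := by field_simp
    have x3 : (δ*L^2)^3/6 ≤ Real.exp (δ*L^2) := by
      have := Real.pow_div_factorial_le_exp (δ*L^2) (by positivity) 3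
      simpa [Nat.factorial] using this
    have x4 : (L^2)^3 * Real.exp (-(δ*L^2)) ≤ 6/δ^3 := by
      rw [Real.exp_neg, ← div_eq_mul_inv, div_le_div_iff₀ (Real.exp_pos _) (by positivity)]
      rw [mul_pow] at x3
      linarith
    calc (1+v^2) * Real.exp (-(δ*L^2)) = Real.exp (-(δ*L^2)) + v^2 * Real.exp (-(δ*L^2)) := by ring
      _ ≤ 1 + ((Real.pi/Bc)^2 * (L^2)^3) * Real.exp (-(δ*L^2)) := by gcongr
      _ = 1 + (Real.pi/Bc)^2 * ((L^2)^3 * Real.exp (-(δ*L^2))) := by ring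
      _ ≤ _ := by gcongr
  rw [← div_eq_mul_inv, le_div_iff₀ (by positivity)]
  calc ‖J L v‖ * (1+v^2) ≤ (8*K0*Real.exp (-(δ*L^2))) * (1+v^2) := by gcongr; exact hJ.trans (by gcongr)
    _ = 8*K0*((1+v^2)*Real.exp (-(δ*L^2))) := by ring
    _ ≤ _ := by gcongr

lemma J_cont (L : ℝ) (hL : 0 < L) : Continuous (J L) := by
  have hB := Bc_pos
  have ht : Continuous (fun v => tau L v) := by unfold tau uu; fun_prop
  have hg : Continuous (fun v => gC (Complex.exp (-tau L v))) := by
    apply gC_diff.continuousOn.comp_continuous (by fun_prop)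
    intro v
    rw [mem_ball_zero_iff, Complex.norm_exp, Complex.neg_re, tau_re, Real.exp_lt_one_iff]
    have : 0 < Bc/L^2 := by positivity
    linarith
  unfold J
  fun_prop

lemma J_dct : Tendsto (fun L : ℝ => ∫ v, Set.indicator (Set.Ioc (-(Real.pi*L^3/Bc)) (Real.pi*L^3/Bc)) (J L) v) atTop
    (𝓝 ((5/48 : ℝ) : ℂ)) := by
  have hB := Bc_pos
  have hpi := Real.pi_pos
  have hK := K0_pos
  have hint : ∫ v : ℝ, ((K0 * Real.exp (-Bc * v^2) : ℝ) : ℂ) = ((5/48 : ℝ) : ℂ) := by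
    rw [integral_complex_ofReal, MeasureTheory.integral_const_mul, integral_gaussian]
    congr 1
    unfold K0
    rw [mul_assoc, ← Real.sqrt_mul (by positivity), show Bc/Real.pi*(Real.pi/Bc) = 1 by field_simp, Real.sqrt_one, Bc_sq]
    field_simp
    norm_num
  rw [← hint]
  obtain ⟨L1, hL1, hmaj⟩ := J_major
  obtain ⟨L2, C, hL2, hC, hmin⟩ := J_minor
  refine MeasureTheory.tendsto_integral_filter_of_dominated_convergence
    (fun v => 8*K0*Real.exp (-(Bc/2)*v^2) + C*(1+v^2)⁻¹) ?_ ?_ ?_ ?_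
  · filter_upwards [eventually_gt_atTop 0] with L hL
    exact (J_cont L hL).aestronglyMeasurable.indicator measurableSet_Ioc
  · filter_upwards [eventually_ge_atTop L1, eventually_ge_atTop L2] with L h1 h2
    refine Eventually.of_forall fun v => ?_
    have p1 : 0 ≤ 8*K0*Real.exp (-(Bc/2)*v^2) := by positivity
    have p2 : 0 ≤ C*(1+v^2)⁻¹ := by positivity
    by_cases hv : v ∈ Set.Ioc (-(Real.pi*L^3/Bc)) (Real.pi*L^3/Bc)
    · rw [Set.indicator_of_mem hv]
      rcases le_total |v| L with h | h
      · linarith [hmaj L v h1 h]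
      · have := hmin L v h2 h (abs_le.mpr ⟨hv.1.le, hv.2⟩)
        linarith
    · rw [Set.indicator_of_notMem hv, norm_zero]; positivity
  · exact ((integrable_exp_neg_mul_sq (by positivity)).const_mul _).add (integrable_inv_one_add_sq.const_mul _)
  · refine Eventually.of_forall fun v => ?_
    refine (J_lim v).congr' ?_
    have h3 : Tendsto (fun L : ℝ => Real.pi*L^3/Bc) atTop atTop :=
      ((tendsto_pow_atTop (by norm_num)).const_mul_atTop hpi).atTop_div_const hB
    filter_upwards [h3.eventually_gt_atTop |v|] with L hL
    rw [Set.indicator_of_mem]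
    have := abs_lt.mp hL
    exact ⟨this.1, this.2.le⟩

lemma A_asym : Tendsto (fun n : ℕ => (A n : ℝ) * (n:ℝ)^((3:ℝ)/2) * Real.exp (-(2*Bc*Real.sqrt n))) atTop (𝓝 (5/48)) := by
  have hL : Tendsto (fun n : ℕ => Real.sqrt (Real.sqrt n)) atTop atTop :=
    Real.tendsto_sqrt_atTop.comp (Real.tendsto_sqrt_atTop.comp tendsto_natCast_atTop_atTop)
  have h := (Complex.continuous_re.tendsto _).comp (J_dct.comp hL)
  rw [Complex.ofReal_re] at h
  refine h.congr' ?_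
  filter_upwards [eventually_gt_atTop 0] with n hn
  have hn' : (0:ℝ) < n := by exact_mod_cast hn
  have hs : Real.sqrt (Real.sqrt n) ^ 2 = Real.sqrt n := Real.sq_sqrt (Real.sqrt_nonneg _)
  have h4 : Real.sqrt (Real.sqrt n) ^ 4 = n := by
    rw [show 4 = 2*2 by norm_num, pow_mul, hs, Real.sq_sqrt hn'.le]
  have h6 : Real.sqrt (Real.sqrt n) ^ 6 = (n:ℝ)^((3:ℝ)/2) := by
    rw [show 6 = 2*3 by norm_num, pow_mul, hs, Real.sqrt_eq_rpow, ← Real.rpow_natCast, ← Real.rpow_mul hn'.le]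
    norm_num
  simp only [Function.comp]
  rw [← J_int n _ (by positivity) h4, Complex.ofReal_re, h6, hs]
  ring_nf

end BipAsy

namespace BipAsy
open ENNReal Filter Topology

noncomputable def pk (k n : ℕ) : ℕ := bipartitePi (n+k) n

lemma A_pk (k n : ℕ) : A n = pk k n + if k+1 ≤ n then pk (k+1) (n-(k+1)) else 0 := by
  rw [A_eq k n]
  unfold pk
  congr 1
  split_ifs with h
  · rw [Nat.sub_add_cancel h]
  · rfl

lemma pk_mono (k : ℕ) : Monotone (pk k) := by
  apply monotone_nat_of_le_succ
  intro n
  unfold pk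
  rw [show n + 1 + k = n + k + 1 by ring]
  exact (bip_mono_left _ _).trans (bip_mono_right _ _)

lemma pk_up (k n : ℕ) : pk k n ≤ pk (k+1) n := bip_mono_left _ _
lemma pk_dn (k n : ℕ) : pk (k+1) n ≤ pk k (n+1) := by
  unfold pk
  rw [show n + 1 + k = n + (k + 1) by ring]
  exact bip_mono_right _ _

lemma A_mono : Monotone A := by
  apply monotone_nat_of_le_succ
  intro n
  rw [A_pk 0 n, A_pk 0 (n+1)]
  apply add_le_add (pk_mono 0 (Nat.le_succ n))
  split_ifs
  · exact pk_mono _ (by omega)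
  · omega
  · simp
  · simp

noncomputable def Ap (n j : ℕ) : ℕ := if j ≤ n then A (n-j) else 0
noncomputable def pe (k n j : ℕ) : ℕ := if j ≤ n then pk k (n-j) else 0

lemma Ap_pe (k n j : ℕ) : Ap n j = pe k n j + pe (k+1) n (j+(k+1)) := by
  unfold Ap pe
  by_cases h : j ≤ n
  · rw [if_pos h, if_pos h, A_pk k (n-j)]
    congr 1
    by_cases h2 : k + 1 ≤ n - j
    · rw [if_pos h2, if_pos (by omega)]; congr 1; omega
    · rw [if_neg h2, if_neg (by omega)]
  · rw [if_neg h, if_neg h, if_neg (by omega)]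

lemma pe_le (k n j : ℕ) : pe k n j ≤ Ap n j := by rw [Ap_pe k]; omega

lemma Ap_anti (n : ℕ) : Antitone (Ap n) := by
  intro i j h
  unfold Ap
  split_ifs
  · exact A_mono (by omega)
  · omega
  · simp
  · simp

def Jn (k : ℕ) : ℕ → ℕ
  | 0 => 0
  | l+1 => Jn k l + (k+l+1)

lemma unroll (k n M : ℕ) : (pk k n : ℝ) = ∑ l ∈ range M, (-1)^l * (Ap n (Jn k l) : ℝ) + (-1)^M * (pe (k+M) n (Jn k M) : ℝ) := by
  induction M with
  | zero => simp [pe, Jn]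
  | succ M ih =>
    rw [ih, Finset.sum_range_succ]
    have := Ap_pe (k+M) n (Jn k M)
    have h2 : (Ap n (Jn k M) : ℝ) = pe (k+M) n (Jn k M) + pe (k+(M+1)) n (Jn k (M+1)) := by
      exact_mod_cast this
    rw [h2, pow_succ]; ring

lemma unroll_abs (k n M : ℕ) : |(pk k n : ℝ)/A n - ∑ l ∈ range M, (-1)^l * ((Ap n (Jn k l) : ℝ)/A n)| ≤ (Ap n (Jn k M) : ℝ)/A n := by
  rw [unroll k n M, add_div, Finset.sum_div]
  simp only [mul_div_assoc]
  rw [add_sub_cancel_left, abs_mul, abs_pow, abs_neg, abs_one, one_pow, one_mul, abs_of_nonneg (by positivity)]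
  gcongr
  exact pe_le _ _ _

noncomputable def G (n : ℕ) : ℝ := (A n : ℝ) * (n:ℝ)^((3:ℝ)/2) * Real.exp (-(2*Bc*Real.sqrt n))

lemma G_lim : Tendsto G atTop (𝓝 (5/48)) := A_asym

variable {ι : Type*} {l : Filter ι}

lemma ratio {n j : ι → ℕ} {x : ℝ} (hn : Tendsto n l atTop)
    (hj : Tendsto (fun i => (j i : ℝ)/Real.sqrt (n i)) l (𝓝 x)) :
    Tendsto (fun i => (Ap (n i) (j i) : ℝ)/A (n i)) l (𝓝 (Real.exp (-(Bc*x)))) := by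
  have hnR : Tendsto (fun i => (n i : ℝ)) l atTop := tendsto_natCast_atTop_atTop.comp hn
  have hsq : Tendsto (fun i => Real.sqrt (n i)) l atTop := Real.tendsto_sqrt_atTop.comp hnR
  have hjn : Tendsto (fun i => (j i : ℝ)/n i) l (𝓝 0) := by
    have := hj.div_atTop hsq
    refine this.congr fun i => ?_
    rw [div_div, Real.mul_self_sqrt (by positivity)]
  have hlt : ∀ᶠ i in l, j i ≤ n i := by
    filter_upwards [hjn.eventually_lt_const one_pos, hn.eventually_gt_atTop 0] with i h1 h2
    rw [div_lt_one (by exact_mod_cast h2)] at h1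
    exact_mod_cast h1.le
  have hq : Tendsto (fun i => ((n i - j i : ℕ) : ℝ)/n i) l (𝓝 1) := by
    have := hjn.const_sub 1
    rw [sub_zero] at this
    refine this.congr' ?_
    filter_upwards [hlt, hn.eventually_gt_atTop 0] with i h1 h2
    rw [Nat.cast_sub h1, sub_div, div_self (by positivity)]
  have hm : Tendsto (fun i => n i - j i) l atTop := by
    have : Tendsto (fun i => ((n i - j i : ℕ) : ℝ)) l atTop := by
      have := hnR.atTop_mul_pos one_pos hq
      refine this.congr' ?_
      filter_upwards [hn.eventually_gt_atTop 0] with i h2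
      field_simp
    exact tendsto_natCast_atTop_iff.mp this
  have hG := (G_lim.comp hm).div (G_lim.comp hn) (by norm_num)
  rw [div_self (by norm_num)] at hG
  have hpw : Tendsto (fun i => (((n i - j i : ℕ) : ℝ)/n i)^(-((3:ℝ)/2))) l (𝓝 1) := by
    have := hq.rpow_const (p := -((3:ℝ)/2)) (Or.inl one_ne_zero)
    simpa using this
  have hex : Tendsto (fun i => Real.exp (-(2*Bc*(((j i : ℝ)/Real.sqrt (n i)) / (1 + Real.sqrt (((n i - j i : ℕ) : ℝ)/n i)))))) l
      (𝓝 (Real.exp (-(Bc*x)))) := by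
    have h1 := (hq.sqrt).const_add 1
    rw [Real.sqrt_one] at h1
    have h2 := (Real.continuous_exp.tendsto _).comp (((hj.div h1 (by norm_num)).const_mul (2*Bc)).neg)
    rw [show -(2*Bc*(x/(1+1))) = -(Bc*x) by ring] at h2
    exact h2
  have hall := (hG.mul hpw).mul hex
  rw [one_mul, one_mul] at hall
  refine hall.congr' ?_
  filter_upwards [hlt, hn.eventually_gt_atTop 0, hm.eventually_gt_atTop 0] with i h1 h2 h3
  simp only [Function.comp, Pi.div_apply]
  unfold Ap
  rw [if_pos h1]
  have hcast : ((n i - j i : ℕ) : ℝ) = n i - j i := Nat.cast_sub h1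
  generalize n i - j i = m at *
  generalize n i = N at *
  generalize j i = k at *
  have hN : (0:ℝ) < N := by exact_mod_cast h2
  have hM : (0:ℝ) < m := by exact_mod_cast h3
  have hk : (k:ℝ) = N - m := by linarith
  unfold G
  have e1 : (k:ℝ)/Real.sqrt N / (1 + Real.sqrt (m/N)) = Real.sqrt N - Real.sqrt m := by
    rw [Real.sqrt_div hM.le, hk]
    have s1 := Real.sqrt_pos.mpr hN
    have s2 := Real.sqrt_pos.mpr hM
    have q1 := Real.sq_sqrt hN.le
    have q2 := Real.sq_sqrt hM.le
    field_simp
    nlinarith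
  rw [e1, Real.div_rpow hM.le hN.le, Real.rpow_neg hM.le, Real.rpow_neg hN.le]
  have x1 := Real.rpow_pos_of_pos hM (3/2)
  have x2 := Real.rpow_pos_of_pos hN (3/2)
  have e2 : Real.exp (-(2*Bc*(Real.sqrt N - Real.sqrt m))) = Real.exp (-(2*Bc*Real.sqrt N)) / Real.exp (-(2*Bc*Real.sqrt m)) := by
    rw [← Real.exp_sub]; congr 1; ring
  rw [e2]
  have y1 := Real.exp_pos (-(2*Bc*Real.sqrt N))
  have y2 := Real.exp_pos (-(2*Bc*Real.sqrt m))
  by_cases hA : (A N : ℝ) = 0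
  · simp [hA]
  field_simp

lemma A_pos_ev : ∀ᶠ n : ℕ in atTop, (0:ℝ) < A n := by
  filter_upwards [G_lim.eventually_const_lt (show (0:ℝ) < 5/48 by norm_num)] with n hn
  rcases (Nat.cast_nonneg (A n) : (0:ℝ) ≤ A n).lt_or_eq with h | h
  · exact h
  · unfold G at hn; rw [← h] at hn; simp at hn

lemma ratio_top {n j : ι → ℕ} (hn : Tendsto n l atTop)
    (hj : Tendsto (fun i => (j i : ℝ)/Real.sqrt (n i)) l atTop) :
    Tendsto (fun i => (Ap (n i) (j i) : ℝ)/A (n i)) l (𝓝 0) := by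
  have hB := Bc_pos
  have hnR : Tendsto (fun i => (n i : ℝ)) l atTop := tendsto_natCast_atTop_atTop.comp hn
  have hsq : Tendsto (fun i => Real.sqrt (n i)) l atTop := Real.tendsto_sqrt_atTop.comp hnR
  rw [tendsto_order]
  refine ⟨fun a ha => Eventually.of_forall fun i => ha.trans_le (by positivity), fun ε hε => ?_⟩
  have hM : Tendsto (fun M : ℝ => Real.exp (-(Bc*M))) atTop (𝓝 0) :=
    Real.tendsto_exp_neg_atTop_nhds_zero.comp (tendsto_id.const_mul_atTop hB)
  obtain ⟨M, hMε, hM0⟩ := ((hM.eventually_lt_const hε).and (eventually_ge_atTop 0)).exists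
  have hfl : Tendsto (fun i => ((⌊M*Real.sqrt (n i)⌋₊ : ℕ) : ℝ)/Real.sqrt (n i)) l (𝓝 M) :=
    (tendsto_nat_floor_mul_div_atTop hM0).comp hsq
  have hr := (ratio hn hfl).eventually_lt_const hMε
  filter_upwards [hr, hj.eventually_ge_atTop M, hn.eventually_gt_atTop 0] with i h1 h2 h3
  refine lt_of_le_of_lt ?_ h1
  gcongr
  apply Ap_anti
  have : (0:ℝ) < n i := by exact_mod_cast h3
  rw [le_div_iff₀ (Real.sqrt_pos.mpr this)] at h2
  exact Nat.floor_le_of_le h2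

lemma Jn_lim {n k : ι → ℕ} {x : ℝ} (hn : Tendsto n l atTop)
    (hk : Tendsto (fun i => (k i : ℝ)/Real.sqrt (n i)) l (𝓝 x)) (M : ℕ) :
    Tendsto (fun i => (Jn (k i) M : ℝ)/Real.sqrt (n i)) l (𝓝 (M*x)) := by
  have hnR : Tendsto (fun i => (n i : ℝ)) l atTop := tendsto_natCast_atTop_atTop.comp hn
  have hsq : Tendsto (fun i => Real.sqrt (n i)) l atTop := Real.tendsto_sqrt_atTop.comp hnR
  induction M with
  | zero =>
    simp [Jn]
    exact tendsto_const_nhds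
  | succ M ih =>
    have h1 : Tendsto (fun i => ((M+1:ℕ):ℝ)/Real.sqrt (n i)) l (𝓝 0) := tendsto_const_nhds.div_atTop hsq
    have := (ih.add hk).add h1
    rw [show (M:ℝ)*x+x+0 = ((M+1:ℕ):ℝ)*x by push_cast; ring] at this
    refine this.congr fun i => ?_
    simp only [Jn]
    push_cast
    ring

lemma pk_le_A (k n : ℕ) : pk k n ≤ A n := by rw [A_pk k n]; omega

lemma A_le_two (k n : ℕ) : A n ≤ 2 * pk k n := by
  rw [A_pk k n]
  split_ifs with h
  · have h1 := pk_dn k (n-(k+1))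
    have h2 := pk_mono k (show n - (k+1) + 1 ≤ n by omega)
    omega
  · omega

lemma two_le_A (k n : ℕ) : 2 * pk k n ≤ A (n+(k+1)) := by
  rw [A_pk k (n+(k+1)), if_pos (by omega), Nat.add_sub_cancel]
  have h1 := pk_up k n
  have h2 := pk_mono k (show n ≤ n+(k+1) by omega)
  omega

lemma pk_ratio (u : Ultrafilter (ℕ × ℕ)) (hu : (u : Filter (ℕ × ℕ)) ≤ Filter.comap Prod.snd atTop) :
    Tendsto (fun i : ℕ × ℕ => (pk i.1 i.2 : ℝ)/A i.2 * (1 + Real.exp (-(Bc * ((i.1:ℝ)/Real.sqrt i.2))))) u (𝓝 1) := by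
  have hB := Bc_pos
  have hn : Tendsto (fun i : ℕ × ℕ => i.2) u atTop := tendsto_comap.mono_left hu
  have hnR : Tendsto (fun i : ℕ × ℕ => (i.2 : ℝ)) u atTop := tendsto_natCast_atTop_atTop.comp hn
  have hsq : Tendsto (fun i : ℕ × ℕ => Real.sqrt i.2) u atTop := Real.tendsto_sqrt_atTop.comp hnR
  have hA := hn.eventually A_pos_ev
  obtain ⟨x, hx⟩ : ∃ x : ℝ≥0∞, Tendsto (fun i : ℕ × ℕ => ENNReal.ofReal ((i.1:ℝ)/Real.sqrt i.2)) u (𝓝 x) :=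
    ⟨_, (u.map (fun i : ℕ × ℕ => ENNReal.ofReal ((i.1:ℝ)/Real.sqrt i.2))).le_nhds_lim⟩
  obtain ⟨y, -, hy⟩ : ∃ y ∈ Set.Icc (0:ℝ) 1, Tendsto (fun i : ℕ × ℕ => (pk i.1 i.2 : ℝ)/A i.2) u (𝓝 y) := by
    refine isCompact_Icc.ultrafilter_le_nhds' (u.map (fun i : ℕ × ℕ => (pk i.1 i.2 : ℝ)/A i.2)) ?_
    rw [Ultrafilter.mem_map]
    refine Filter.mem_of_superset Filter.univ_mem fun i _ => ?_
    refine ⟨by positivity, div_le_one_of_le₀ (by exact_mod_cast pk_le_A _ _) (by positivity)⟩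
  by_cases hxt : x = ⊤
  · subst hxt
    rw [ENNReal.tendsto_ofReal_nhds_top] at hx
    have hJ1 : Tendsto (fun i : ℕ × ℕ => (Jn i.1 1 : ℝ)/Real.sqrt i.2) u atTop := by
      refine tendsto_atTop_mono (fun i => ?_) hx
      gcongr
      simp [Jn]
    have hr := ratio_top hn hJ1
    have hle : |y - 1| ≤ 0 := by
      refine le_of_tendsto_of_tendsto ((hy.sub_const 1).abs) hr ?_
      filter_upwards [hA] with i hi
      have := unroll_abs i.1 i.2 1
      simpa [Jn, Ap, div_self hi.ne'] using this
    have hy1 : y = 1 := by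
      have := abs_nonpos_iff.mp hle
      linarith
    subst hy1
    have he : Tendsto (fun i : ℕ × ℕ => Real.exp (-(Bc * ((i.1:ℝ)/Real.sqrt i.2)))) u (𝓝 0) :=
      Real.tendsto_exp_neg_atTop_nhds_zero.comp (hx.const_mul_atTop hB)
    simpa using hy.mul (he.const_add 1)
  · have hx' : Tendsto (fun i : ℕ × ℕ => (i.1:ℝ)/Real.sqrt i.2) u (𝓝 x.toReal) := by
      have := (ENNReal.tendsto_toReal hxt).comp hx
      refine this.congr fun i => ?_
      simp only [Function.comp]
      rw [ENNReal.toReal_ofReal (by positivity)]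
    set z := x.toReal with hz
    have hz0 : 0 ≤ z := ENNReal.toReal_nonneg
    have he : Tendsto (fun i : ℕ × ℕ => Real.exp (-(Bc * ((i.1:ℝ)/Real.sqrt i.2)))) u (𝓝 (Real.exp (-(Bc*z)))) :=
      (Real.continuous_exp.tendsto _).comp (hx'.const_mul Bc).neg
    have hfin := hy.mul (he.const_add 1)
    suffices hyz : y * (1 + Real.exp (-(Bc*z))) = 1 by rwa [hyz] at hfin
    rcases hz0.eq_or_lt with h0 | h0
    · rw [← h0]
      have hn' : Tendsto (fun i : ℕ × ℕ => i.2 + (i.1+1)) u atTop := tendsto_atTop_mono (fun i => by omega) hn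
      have hj' : Tendsto (fun i : ℕ × ℕ => ((i.1+1 : ℕ) : ℝ)/Real.sqrt ((i.2 + (i.1+1) : ℕ) : ℝ)) u (𝓝 0) := by
        have h1 : Tendsto (fun i : ℕ × ℕ => (i.1:ℝ)/Real.sqrt i.2 + 1/Real.sqrt i.2) u (𝓝 0) := by
          have := hx'.add (tendsto_const_nhds (x := (1:ℝ)).div_atTop hsq)
          rwa [← h0, zero_add] at this
        refine tendsto_of_tendsto_of_tendsto_of_le_of_le' tendsto_const_nhds h1 (Eventually.of_forall fun i => by positivity) ?_
        filter_upwards [hn.eventually_gt_atTop 0] with i hi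
        have hi' : (0:ℝ) < i.2 := by exact_mod_cast hi
        rw [← add_div]
        push_cast
        gcongr
        linarith
      have hr := ratio hn' hj'
      simp only [mul_zero, neg_zero, Real.exp_zero] at hr
      have hr2 := (hr.inv₀ one_ne_zero).div_const 2
      rw [inv_one] at hr2
      have hup : y ≤ 1/2 := by
        refine le_of_tendsto_of_tendsto hy hr2 ?_
        filter_upwards [hA] with i hi
        unfold Ap
        rw [if_pos (by omega), Nat.add_sub_cancel, inv_div, div_div, div_le_div_iff₀ hi (by positivity)]
        have : (2:ℝ) * pk i.1 i.2 ≤ A (i.2+(i.1+1)) := by exact_mod_cast two_le_A i.1 i.2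
        nlinarith
      have hlo : 1/2 ≤ y := by
        refine ge_of_tendsto hy ?_
        filter_upwards [hA] with i hi
        rw [le_div_iff₀ hi]
        have : (A i.2 : ℝ) ≤ 2 * pk i.1 i.2 := by exact_mod_cast A_le_two i.1 i.2
        linarith
      rw [le_antisymm hup hlo]; norm_num
    · set r := Real.exp (-(Bc*z)) with hr
      have hr1 : r < 1 := by rw [hr, Real.exp_lt_one_iff]; have : 0 < Bc*z := by positivity
                             linarith
      have hr0 : 0 < r := Real.exp_pos _
      have hJ : ∀ M : ℕ, Tendsto (fun i : ℕ × ℕ => (Ap i.2 (Jn i.1 M) : ℝ)/A i.2) u (𝓝 (r^M)) := by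
        intro M
        have := ratio hn (Jn_lim hn hx' M)
        rwa [show Real.exp (-(Bc*(M*z))) = r^M by rw [hr, ← Real.exp_nat_mul]; congr 1; ring] at this
      have hle : ∀ M : ℕ, |y - ∑ l ∈ range M, (-1)^l * r^l| ≤ r^M := by
        intro M
        refine le_of_tendsto_of_tendsto' ((hy.sub (tendsto_finsetSum _ fun l _ => (hJ l).const_mul _)).abs) (hJ M) fun i => ?_
        exact unroll_abs i.1 i.2 M
      have hg : HasSum (fun l : ℕ => (-1)^l * r^l) (1 + r)⁻¹ := by
        have := hasSum_geometric_of_norm_lt_one (ξ := -r) (by rw [norm_neg, Real.norm_of_nonneg hr0.le]; exact hr1)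
        simp only [sub_neg_eq_add] at this
        refine this.congr_fun ?_
        intro l
        rw [← mul_pow]; ring
      have hl := le_of_tendsto_of_tendsto' ((hg.tendsto_sum_nat.const_sub y).abs) (tendsto_pow_atTop_nhds_zero_of_lt_one hr0.le hr1) hle
      have : y = (1+r)⁻¹ := by
        have := abs_nonpos_iff.mp hl
        linarith
      rw [this, inv_mul_cancel₀ (by positivity)]

end BipAsy

namespace BipAsy
open ENNReal Filter Topology

lemma pk_final : Tendsto (fun i : ℕ × ℕ => (pk i.1 i.2 : ℝ) * (i.2:ℝ)^((3:ℝ)/2) * Real.exp (-(2*Bc*Real.sqrt i.2))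
      * (1 + Real.exp (-(Bc * ((i.1:ℝ)/Real.sqrt i.2)))) / (5/48)) (Filter.comap Prod.snd atTop) (𝓝 1) := by
  have h1 : Tendsto (fun i : ℕ × ℕ => (pk i.1 i.2 : ℝ)/A i.2 * (1 + Real.exp (-(Bc * ((i.1:ℝ)/Real.sqrt i.2)))))
      (Filter.comap Prod.snd atTop) (𝓝 1) := by
    rw [tendsto_iff_ultrafilter]
    intro u hu
    exact pk_ratio u hu
  have h2 : Tendsto (fun i : ℕ × ℕ => G i.2) (Filter.comap Prod.snd atTop) (𝓝 (5/48)) :=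
    G_lim.comp tendsto_comap
  have h3 := (h1.mul h2).div_const (5/48)
  rw [one_mul, div_self (by norm_num)] at h3
  refine h3.congr' ?_
  have hA : ∀ᶠ i : ℕ × ℕ in Filter.comap Prod.snd atTop, (0:ℝ) < A i.2 :=
    (tendsto_comap (f := (Prod.snd : ℕ × ℕ → ℕ))).eventually A_pos_ev
  filter_upwards [hA] with i hi
  unfold G
  field_simp

lemma pk_eps (ε : ℝ) (hε : 0 < ε) : ∃ N : ℕ, ∀ n ≥ N, ∀ k : ℕ,
    |(pk k n : ℝ) * (n:ℝ)^((3:ℝ)/2) * Real.exp (-(2*Bc*Real.sqrt n))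
      * (1 + Real.exp (-(Bc * ((k:ℝ)/Real.sqrt n)))) / (5/48) - 1| < ε := by
  have h := (Metric.tendsto_nhds.mp pk_final) ε hε
  rw [Filter.eventually_comap, Filter.eventually_atTop] at h
  obtain ⟨N, hN⟩ := h
  exact ⟨N, fun n hn k => by simpa [Real.dist_eq] using hN n hn (k, n) rfl⟩

lemma final_aux (c : ℝ) (hc : c = 2 * Bc) (p k n : ℕ) (hn : 0 < n) :
    (p : ℝ) / (5 / (2 ^ 4 * 3) * Real.exp (c * Real.sqrt n) / (n : ℝ) ^ ((3 : ℝ) / 2) /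
            (1 + Real.exp (-(c * (k:ℝ)) / (2 * Real.sqrt n)))) =
    (p : ℝ) * (n:ℝ)^((3:ℝ)/2) * Real.exp (-(2*Bc*Real.sqrt n))
      * (1 + Real.exp (-(Bc * ((k:ℝ)/Real.sqrt n)))) / (5/48) := by
  subst hc
  have hn' : (0:ℝ) < n := by exact_mod_cast hn
  have hs : 0 < Real.sqrt n := Real.sqrt_pos.mpr hn'
  have e1 : -(2 * Bc * (k:ℝ)) / (2 * Real.sqrt n) = -(Bc * ((k:ℝ)/Real.sqrt n)) := by
    field_simp
  rw [e1, Real.exp_neg (2*Bc*Real.sqrt n)]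
  have hp : (0:ℝ) < (n:ℝ)^((3:ℝ)/2) := Real.rpow_pos_of_pos hn' _
  have he := Real.exp_pos (2*Bc*Real.sqrt n)
  have he2 := Real.exp_pos (-(Bc * ((k:ℝ)/Real.sqrt n)))
  generalize Real.exp (-(Bc * ((k:ℝ)/Real.sqrt n))) = E2 at *
  generalize Real.exp (2*Bc*Real.sqrt n) = E1 at *
  generalize (n:ℝ)^((3:ℝ)/2) = Q at *
  field_simp
  ring

end BipAsy

open Real in
/-- uniformly for positive integers `m, n`, as `μ = min(m,n) → ∞`,
`π(m,n) ~ (5/48) · e^{c√μ}/μ^{3/2} · (1 + e^{-c|n-m|/(2√μ)})⁻¹` where `c = 2π√(5/12)`. -/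
theorem bipartitePi_asymptotic (c : ℝ) (hc : c = 2 * π * Real.sqrt (5 / 12)) :
    ∀ ε > (0 : ℝ), ∃ N : ℕ, ∀ m n : ℕ, 0 < m → 0 < n → N ≤ min m n →
      |(bipartitePi m n : ℝ) /
          (5 / (2 ^ 4 * 3) * Real.exp (c * Real.sqrt (min m n)) /
              ((min m n : ℕ) : ℝ) ^ ((3 : ℝ) / 2) /
            (1 + Real.exp (-(c * |(n : ℝ) - (m : ℝ)|) /
                (2 * Real.sqrt (min m n))))) - 1| < ε := by
  intro ε hε
  have hc' : c = 2 * BipAsy.Bc := by rw [hc, BipAsy.Bc]; ring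
  obtain ⟨N, hN⟩ := BipAsy.pk_eps ε hε
  refine ⟨N, fun m n hm hn hmn => ?_⟩
  rcases le_total n m with h | h
  · obtain ⟨k, rfl⟩ := Nat.exists_eq_add_of_le h
    have e : |(n:ℝ) - ((n + k : ℕ) : ℝ)| = (k:ℝ) := by
      push_cast
      rw [show (n:ℝ) - (n + k) = -k by ring, abs_neg, Nat.abs_cast]
    have e2 : (min (n + k) n) = n := by omega
    have e3 : min ((n + k : ℕ) : ℝ) (n:ℝ) = n := by rw [← Nat.cast_min, e2]
    rw [e2] at hmn
    simp only [e, e2, e3]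
    rw [BipAsy.final_aux c hc' _ k n hn]
    exact hN n hmn k
  · obtain ⟨k, rfl⟩ := Nat.exists_eq_add_of_le h
    have e : |((m + k : ℕ) : ℝ) - (m:ℝ)| = (k:ℝ) := by
      push_cast
      rw [show (m:ℝ) + k - m = k by ring, Nat.abs_cast]
    have e2 : (min m (m + k)) = m := by omega
    have e3 : min (m:ℝ) ((m + k : ℕ) : ℝ) = m := by rw [← Nat.cast_min, e2]
    rw [e2] at hmn
    simp only [e, e2, e3]
    rw [BipAsy.final_aux c hc' _ k m hm, BipAsy.bip_comm]
    exact hN m hmn k
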